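/- Let ℓ ≥ 2 be an integer and x > 0. Let (a_n) be a sequence of real numbers and (b_n) a sequence of positive real numbers such that, as n → ∞, a_n = x·Z_{ℓ−1}^{[ℓ]}((Z_ℓ^{[ℓ]})^{−1}(n/x)) + o(n^{(ℓ−1)/(2ℓ)}) and b_n = ((x·K_ℓ)^{1/(2ℓ)}/√(ℓ(ℓ−1))) · n^{(ℓ−1)/(2ℓ)} · (1 + o(1)). Then for every real s, ln E[exp(s·(K_{ℓ,n} − a_n)/b_n)] converges to s²/2 as n → ∞, where the expectation is with respect to P_{ℓ,n,x}. -/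

import Mathlib

open Filter Topology Real MeasureTheory Asymptotics

noncomputable section

/-- Number of joint orbits of the subgroup generated by a tuple of permutations. -/
def kappa {ℓ n : ℕ} (σ : Fin ℓ → Equiv.Perm (Fin n)) : ℕ :=
  Nat.card (MulAction.orbitRel.Quotient (Subgroup.closure (Set.range σ)) (Fin n))

/-- `Acount ℓ n k` is the number of commuting `ℓ`-tuples of permutations of `{1,…,n}`
with exactly `k` joint orbits. -/
def Acount (ℓ n k : ℕ) : ℕ :=
  Nat.card {σ : Fin ℓ → Equiv.Perm (Fin n) //
    (∀ i j, σ i * σ j = σ j * σ i) ∧ kappa σ = k}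

/-- `Hpoly ℓ n x = (1/n!) ∑_k A(ℓ,n,k) x^k`. -/
def Hpoly (ℓ n : ℕ) (x : ℝ) : ℝ :=
  (1 / (n.factorial : ℝ)) * ∑ k ∈ Finset.range (n + 1), (Acount ℓ n k : ℝ) * x ^ k

/-- Expectation, under the Ewens-like measure `P_{ℓ,n,x}`, of `g(K_{ℓ,n})`. -/
def expectK (ℓ n : ℕ) (x : ℝ) (g : ℕ → ℝ) : ℝ :=
  (∑ k ∈ Finset.range (n + 1), g k * (Acount ℓ n k : ℝ) * x ^ k) /
    (∑ k ∈ Finset.range (n + 1), (Acount ℓ n k : ℝ) * x ^ k)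

/-- Mean of `K_{ℓ,n}` under `P_{ℓ,n,x}`. -/
def meanK (ℓ n : ℕ) (x : ℝ) : ℝ := expectK ℓ n x (fun k => (k : ℝ))

/-- Variance of `K_{ℓ,n}` under `P_{ℓ,n,x}`. -/
def varK (ℓ n : ℕ) (x : ℝ) : ℝ :=
  expectK ℓ n x (fun k => ((k : ℝ) - meanK ℓ n x) ^ 2)

/-- Real Riemann zeta values (as a series), `zetaR s = ∑_{m ≥ 1} m^{-s}`. -/
def zetaR (s : ℝ) : ℝ := ∑' m : ℕ, 1 / ((m : ℝ) + 1) ^ s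

/-- The constant `K_ℓ = (ℓ-1)! ζ(2)⋯ζ(ℓ)`. -/
def Kconst (ℓ : ℕ) : ℝ := ((ℓ - 1).factorial : ℝ) * ∏ j ∈ Finset.Icc 2 ℓ, zetaR (j : ℝ)

/-- The multiple series `Z^{[ℓ]}_{α_1,…,α_ℓ}(t)` with complex exponents. -/
def Zc (ℓ : ℕ) (α : Fin ℓ → ℂ) (t : ℝ) : ℂ :=
  ∑' δ : Fin ℓ → ℕ+,
    (∏ i, ((δ i : ℕ) : ℂ) ^ (α i - 1)) *
      Complex.exp (-(((∏ i, ((δ i : ℕ) : ℝ)) * t : ℝ) : ℂ))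

/-- The multiple series `Z^{[ℓ]}_{α_1,…,α_ℓ}(t)` with real exponents. -/
def Zr (ℓ : ℕ) (α : Fin ℓ → ℝ) (t : ℝ) : ℝ :=
  ∑' δ : Fin ℓ → ℕ+,
    (∏ i, ((δ i : ℕ) : ℝ) ^ (α i - 1)) *
      Real.exp (-(∏ i, ((δ i : ℕ) : ℝ)) * t)

/-- The staircase series `Z_m^{[ℓ]}(t) = Z^{[ℓ]}_{m,m-1,…,m-ℓ+1}(t)`. -/
def Zstair (ℓ : ℕ) (m : ℤ) (t : ℝ) : ℝ :=
  Zr ℓ (fun i => (m : ℝ) - (i : ℕ)) t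

/-- The inverse function `(Z_ℓ^{[ℓ]})^{-1} : (0,∞) → (0,∞)`. -/
def ZstairInv (ℓ : ℕ) (u : ℝ) : ℝ :=
  Function.invFunOn (Zstair ℓ ℓ) (Set.Ioi 0) u

/-- The function `q_{ℓ,n}(y,u,θ)` from the saddle point analysis. -/
def qfun (ℓ n : ℕ) (y u θ : ℝ) : ℂ :=
  Complex.I * (n : ℂ) * (θ : ℂ) - (y : ℂ) * ∑' δ : Fin ℓ → ℕ+,
    (∏ i, ((δ i : ℕ) : ℂ) ^ ((ℓ : ℤ) - 2 - (i : ℕ))) *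
      Complex.exp (-(((∏ i, ((δ i : ℕ) : ℝ)) * u : ℝ) : ℂ)) *
      (Complex.exp (Complex.I * (((∏ i, ((δ i : ℕ) : ℝ)) * θ : ℝ) : ℂ)) - 1)

/-- The normalizing sequence `b_n = ((x K_ℓ)^{1/(2ℓ)}/√(ℓ(ℓ-1))) n^{(ℓ-1)/(2ℓ)}`. -/
def bseq (ℓ : ℕ) (x : ℝ) (n : ℕ) : ℝ :=
  (x * Kconst ℓ) ^ ((1 : ℝ) / (2 * (ℓ : ℝ))) / Real.sqrt ((ℓ : ℝ) * ((ℓ : ℝ) - 1)) *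
    (n : ℝ) ^ (((ℓ : ℝ) - 1) / (2 * (ℓ : ℝ)))

/-- The sequence `x_n = x e^{s/b_n}`. -/
def xseq (ℓ : ℕ) (x s : ℝ) (n : ℕ) : ℝ := x * Real.exp (s / bseq ℓ x n)

/-- The saddle point sequence `t_n = (Z_ℓ^{[ℓ]})^{-1}(n/x)`. -/
def tseq (ℓ : ℕ) (x : ℝ) (n : ℕ) : ℝ := ZstairInv ℓ ((n : ℝ) / x)

end

/-!
A commuting `ℓ`-tuple in `S_n` is an action of `ℤ ^ ℓ` on `n` points, and a transitive action on `N`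
points is the choice of a subgroup of index `N`. Hence
`∑ n, Hpoly ℓ n x z ^ n = exp (x ∑ N, d_N z ^ N)`, where `N d_N` is the number of subgroups of index
`N` in `ℤ ^ ℓ`, and the moments `M_k(t) = ∑ N, d_N N ^ k e ^ (-N t)` are the series
`Z^{[ℓ]}_{ℓ-1+k}(t)`, of order `t ^ (-(ℓ-1+k))` as `t → 0`.

The Laplace transform of the orbit count is a ratio `Hpoly ℓ n (x e ^ w) / Hpoly ℓ n x` with `w` of
order `t_n ^ ((ℓ-1)/2)`, where `x M_1(t_n) = n`. Both coefficients are evaluated by Cauchy's formula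
on the same circle, of radius `e ^ (-t_n)`. Scaled by the width `t_n ^ ((ℓ+1)/2)` of the saddle
point, the integrand converges, with domination, to a Gaussian in which the tilt `w` appears as a
linear phase. The mean `x M_0(t_n)` and the variance are read off the ratio.
-/

open scoped ENNReal

namespace CommutingTuples

/-! ### Homomorphisms into a symmetric group, weighted by their number of orbits -/

section OrbitWeights

variable {G X Y : Type*} [Group G]

/-- The number of orbits on `X` of the action given by `φ`. -/
noncomputable def numOrbits (φ : G →* Equiv.Perm X) : ℕ :=
  Nat.card (MulAction.orbitRel.Quotient φ.range X)

/-- The orbit polynomial `∑_φ x ^ #orbits(φ)` over all actions `φ` of `G` on `X`. -/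
noncomputable def orbitWeightSum (G X : Type*) [Group G] (x : ℝ≥0∞) : ℝ≥0∞ :=
  ∑' φ : G →* Equiv.Perm X, x ^ numOrbits φ

lemma orbitRel_range_iff (φ : G →* Equiv.Perm X) (a b : X) :
    MulAction.orbitRel φ.range X a b ↔ ∃ g, φ g b = a := by
  rw [MulAction.orbitRel_apply]
  constructor
  · rintro ⟨⟨_, g, rfl⟩, h⟩
    exact ⟨g, h⟩
  · rintro ⟨g, h⟩
    exact ⟨⟨φ g, g, rfl⟩, h⟩

lemma numOrbits_permCongr (f : X ≃ Y) (φ : G →* Equiv.Perm X) :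
    numOrbits (f.permCongrHom.monoidHomCongrRightEquiv φ) = numOrbits φ := by
  refine (Nat.card_congr (Quotient.congr f fun a b => ?_)).symm
  change MulAction.orbitRel φ.range X a b ↔ MulAction.orbitRel _ Y (f a) (f b)
  simp [orbitRel_range_iff]

lemma orbitWeightSum_congr (f : X ≃ Y) (x : ℝ≥0∞) :
    orbitWeightSum G X x = orbitWeightSum G Y x := by
  rw [orbitWeightSum, orbitWeightSum, ← f.permCongrHom.monoidHomCongrRightEquiv.tsum_eq]
  simp only [numOrbits_permCongr]

/-- A homogeneous space of `G` embedded in `X`: the data carried by the orbit of a marked point. -/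
abbrev CosetEmbedding (G X : Type*) [Group G] := Σ L : Subgroup G, (G ⧸ L ↪ X)

open Classical in
/-- The action on `X` that is translation on the embedded coset space and `ψ` off it. -/
noncomputable def extendByCosets (L : Subgroup G) (e : G ⧸ L ↪ X)
    (ψ : G →* Equiv.Perm {y // y ∉ Set.range e}) : G →* Equiv.Perm X :=
  (Equiv.Perm.subtypeCongrHom (fun y => y ∈ Set.range e)).comp
    (MonoidHom.prod
      ((Equiv.permCongrHom (Equiv.ofInjective e e.injective)).toMonoidHom.comp
        (MulAction.toPermHom G (G ⧸ L))) ψ)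

section ExtendByCosets

variable (L : Subgroup G) (e : G ⧸ L ↪ X) (ψ : G →* Equiv.Perm {y // y ∉ Set.range e})

lemma extendByCosets_apply_embedding (g : G) (k : G ⧸ L) :
    extendByCosets L e ψ g (e k) = e (g • k) := by
  simp [extendByCosets, Equiv.Perm.subtypeCongrHom, Equiv.Perm.subtypeCongr.left_apply]

lemma extendByCosets_apply_compl (g : G) (y : {y // y ∉ Set.range e}) :
    extendByCosets L e ψ g y = ψ g y := by
  simp [extendByCosets, Equiv.Perm.subtypeCongrHom, Equiv.Perm.subtypeCongr.right_apply, y.2]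

lemma orbitRel_extendByCosets_compl_iff (a b : {y // y ∉ Set.range e}) :
    MulAction.orbitRel (extendByCosets L e ψ).range X a b ↔
      MulAction.orbitRel ψ.range {y // y ∉ Set.range e} a b := by
  simp only [orbitRel_range_iff, extendByCosets_apply_compl, Subtype.ext_iff]

lemma not_orbitRel_extendByCosets_embedding (k : G ⧸ L) (y : {y // y ∉ Set.range e}) :
    ¬ MulAction.orbitRel (extendByCosets L e ψ).range X y (e k) := by
  rw [orbitRel_range_iff]
  rintro ⟨g, hg⟩
  rw [extendByCosets_apply_embedding] at hg
  exact y.2 ⟨_, hg⟩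

/-- The orbits of `extendByCosets L e ψ` are those of `ψ` together with the range of `e`. -/
noncomputable def optionOrbits :
    Option (MulAction.orbitRel.Quotient ψ.range {y // y ∉ Set.range e}) →
      MulAction.orbitRel.Quotient (extendByCosets L e ψ).range X :=
  fun o => o.elim (Quotient.mk _ (e (1 : G)))
    (Quotient.map (fun y => y.1) fun a b => (orbitRel_extendByCosets_compl_iff L e ψ a b).2)

lemma optionOrbits_injective : Function.Injective (optionOrbits L e ψ) := by
  rintro (_ | a) (_ | b) hab
  · rfl
  · induction b using Quotient.inductionOn with | h b =>
    exact absurd (Quotient.exact hab.symm) (not_orbitRel_extendByCosets_embedding L e ψ _ b)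
  · induction a using Quotient.inductionOn with | h a =>
    exact absurd (Quotient.exact hab) (not_orbitRel_extendByCosets_embedding L e ψ _ a)
  · induction a using Quotient.inductionOn with | h a =>
    induction b using Quotient.inductionOn with | h b =>
    exact congrArg some
      (Quotient.sound ((orbitRel_extendByCosets_compl_iff L e ψ a b).1 (Quotient.exact hab)))

lemma optionOrbits_surjective : Function.Surjective (optionOrbits L e ψ) := by
  intro q
  induction q using Quotient.inductionOn with | h y =>
  by_cases hy : y ∈ Set.range e
  · obtain ⟨k, rfl⟩ := hy
    induction k using QuotientGroup.induction_on with | H k =>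
    refine ⟨none, (Quotient.sound ?_).symm⟩
    change MulAction.orbitRel _ X (e (k : G ⧸ L)) (e (1 : G))
    exact (orbitRel_range_iff _ _ _).2 ⟨k, by rw [extendByCosets_apply_embedding]; simp⟩
  · exact ⟨some (Quotient.mk _ ⟨y, hy⟩), rfl⟩

lemma numOrbits_extendByCosets [Finite X] :
    numOrbits (extendByCosets L e ψ) = numOrbits ψ + 1 := by
  rw [numOrbits, numOrbits, ← Finite.card_option]
  exact (Nat.card_congr (Equiv.ofBijective _
    ⟨optionOrbits_injective L e ψ, optionOrbits_surjective L e ψ⟩)).symm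

end ExtendByCosets

section RestrictToCompl

variable (L : Subgroup G) (e : G ⧸ L ↪ X) (φ : G →* Equiv.Perm X)

lemma apply_embedding_eq_smul (h : ∀ g : G, φ g (e (1 : G)) = e g) (g : G) (k : G ⧸ L) :
    φ g (e k) = e (g • k) := by
  induction k using QuotientGroup.induction_on with
  | H k =>
    rw [← h k, ← Equiv.Perm.mul_apply, ← map_mul, h]
    rfl

lemma apply_mem_range_embedding_iff (h : ∀ g : G, φ g (e (1 : G)) = e g) (g : G) (y : X) :
    φ g y ∈ Set.range e ↔ y ∈ Set.range e := by
  constructor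
  · rintro ⟨k, hk⟩
    exact ⟨g⁻¹ • k, by rw [← apply_embedding_eq_smul L e φ h, hk]; simp⟩
  · rintro ⟨k, rfl⟩
    exact ⟨g • k, (apply_embedding_eq_smul L e φ h g k).symm⟩

/-- The restriction of an action to the complement of an orbit parametrised by `e`. -/
noncomputable def restrictToCompl (h : ∀ g : G, φ g (e (1 : G)) = e g) :
    G →* Equiv.Perm {y // y ∉ Set.range e} where
  toFun g := (φ g).subtypePerm fun y => (apply_mem_range_embedding_iff L e φ h g y).not
  map_one' := by ext; simp
  map_mul' a b := by
    ext y
    simp only [map_mul]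
    rfl

/-- Actions for which `e` parametrises the orbit of its base point are the same as actions on the
complement of that orbit. -/
noncomputable def restrictToComplEquiv :
    {φ : G →* Equiv.Perm X // ∀ g : G, φ g (e (1 : G)) = e g} ≃
      (G →* Equiv.Perm {y // y ∉ Set.range e}) where
  toFun φ := restrictToCompl L e φ.1 φ.2
  invFun ψ := ⟨extendByCosets L e ψ, fun g => by rw [extendByCosets_apply_embedding]; simp⟩
  left_inv := by
    rintro ⟨φ, h⟩
    ext g y
    by_cases hy : y ∈ Set.range e
    · obtain ⟨k, rfl⟩ := hy
      simp only [extendByCosets_apply_embedding, apply_embedding_eq_smul L e φ h]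
    · exact extendByCosets_apply_compl L e _ g ⟨y, hy⟩
  right_inv ψ := by
    ext g y
    exact extendByCosets_apply_compl L e ψ g y

end RestrictToCompl

/-- The orbit of `p`, as the coset space of its stabiliser embedded in `X`. -/
noncomputable def orbitEmbedding (p : X) (φ : G →* Equiv.Perm X) : CosetEmbedding G X :=
  letI : MulAction G X := MulAction.compHom X φ
  ⟨MulAction.stabilizer G p, ⟨MulAction.ofQuotientStabilizer G p,
    MulAction.injective_ofQuotientStabilizer G p⟩⟩

lemma mem_orbitEmbedding_fst_iff (p : X) (φ : G →* Equiv.Perm X) (g : G) :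
    g ∈ (orbitEmbedding p φ).1 ↔ φ g p = p := Iff.rfl

lemma cosetEmbedding_ext {M N : CosetEmbedding G X} (hL : M.1 = N.1)
    (he : ∀ g : G, M.2 g = N.2 g) : M = N := by
  obtain ⟨L, e⟩ := M
  obtain ⟨L', e'⟩ := N
  obtain rfl : L = L' := hL
  congr 1
  ext k
  induction k using QuotientGroup.induction_on with | H k => exact he k

lemma orbitEmbedding_eq_iff (p : X) (φ : G →* Equiv.Perm X) (M : CosetEmbedding G X) :
    orbitEmbedding p φ = M ↔ ∀ g : G, φ g p = M.2 g := by
  constructor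
  · rintro rfl g
    rfl
  · intro h
    refine cosetEmbedding_ext ?_ h
    have hbase : p = M.2 (1 : G) := by simpa using h 1
    ext g
    rw [mem_orbitEmbedding_fst_iff, h, hbase, M.2.injective.eq_iff, eq_comm, QuotientGroup.eq]
    simp

lemma embedding_one_eq_of_orbitEmbedding_eq {p : X} {φ : G →* Equiv.Perm X}
    {M : CosetEmbedding G X} (h : orbitEmbedding p φ = M) : M.2 (1 : G) = p := by
  simpa using ((orbitEmbedding_eq_iff p φ M).1 h 1).symm

/-- The pointed actions whose marked orbit is `M` are the actions off the range of `M`. -/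
noncomputable def pointedActionFiberEquiv (M : CosetEmbedding G X) :
    (G →* Equiv.Perm {y // y ∉ Set.range M.2}) ≃
      {z : X × (G →* Equiv.Perm X) // orbitEmbedding z.1 z.2 = M} :=
  (restrictToComplEquiv M.1 M.2).symm.trans
    { toFun := fun φ => ⟨(M.2 (1 : G), φ.1), (orbitEmbedding_eq_iff _ _ M).2 φ.2⟩
      invFun := fun z => ⟨z.1.2, fun g => by
        rw [embedding_one_eq_of_orbitEmbedding_eq z.2]
        exact (orbitEmbedding_eq_iff _ _ M).1 z.2 g⟩
      left_inv := fun _ => rfl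
      right_inv := fun z =>
        Subtype.ext (Prod.ext (embedding_one_eq_of_orbitEmbedding_eq z.2) rfl) }

/-- A pointed action amounts to the embedded orbit of the marked point together with an action on
its complement. -/
noncomputable def pointedActionEquiv (G X : Type*) [Group G] :
    (Σ M : CosetEmbedding G X, (G →* Equiv.Perm {y // y ∉ Set.range M.2})) ≃
      X × (G →* Equiv.Perm X) :=
  (Equiv.sigmaCongrRight pointedActionFiberEquiv).trans
    (Equiv.sigmaFiberEquiv fun z : X × (G →* Equiv.Perm X) => orbitEmbedding z.1 z.2)

lemma pointedActionEquiv_snd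
    (z : Σ M : CosetEmbedding G X, (G →* Equiv.Perm {y // y ∉ Set.range M.2})) :
    (pointedActionEquiv G X z).2 = extendByCosets z.1.1 z.1.2 z.2 := rfl

theorem card_mul_orbitWeightSum [Fintype X] (x : ℝ≥0∞) :
    (Fintype.card X : ℝ≥0∞) * orbitWeightSum G X x =
      x * ∑' L : Subgroup G, ∑' e : G ⧸ L ↪ X, orbitWeightSum G {y // y ∉ Set.range e} x :=
  calc (Fintype.card X : ℝ≥0∞) * orbitWeightSum G X x
      = ∑' z : X × (G →* Equiv.Perm X), x ^ numOrbits z.2 := by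
        rw [ENNReal.tsum_prod (f := fun (_ : X) (φ : G →* Equiv.Perm X) => x ^ numOrbits φ)]
        simp [orbitWeightSum, tsum_fintype]
    _ = ∑' z : Σ M : CosetEmbedding G X, (G →* Equiv.Perm {y // y ∉ Set.range M.2}),
          x * x ^ numOrbits z.2 := by
        rw [← (pointedActionEquiv G X).tsum_eq]
        simp_rw [pointedActionEquiv_snd, numOrbits_extendByCosets, pow_succ']
    _ = x * ∑' M : CosetEmbedding G X, orbitWeightSum G {y // y ∉ Set.range M.2} x := by
        rw [ENNReal.tsum_mul_left, ENNReal.tsum_sigma']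
        rfl
    _ = x * ∑' L : Subgroup G, ∑' e : G ⧸ L ↪ X, orbitWeightSum G {y // y ∉ Set.range e} x := by
        rw [ENNReal.tsum_sigma']

end OrbitWeights

/-! ### Sums over subgroups of finite index -/

/-- The sum of `f [G : L]` over the subgroups `L` of finite index. -/
noncomputable def finiteIndexSum (G : Type*) [Group G] (f : ℕ → ℝ≥0∞) : ℝ≥0∞ :=
  ∑' L : {L : Subgroup G // L.index ≠ 0}, f L.1.index

section FiniteIndexSum

variable {G H : Type*}

lemma finiteIndexSum_congr [Group G] [Group H] (e : G ≃* H) (f : ℕ → ℝ≥0∞) :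
    finiteIndexSum G f = finiteIndexSum H f := by
  have hindex (L : Subgroup G) : (e.mapSubgroup L).index = L.index := by simp
  let E : {L : Subgroup G // L.index ≠ 0} ≃ {L : Subgroup H // L.index ≠ 0} :=
    e.mapSubgroup.toEquiv.subtypeEquiv fun L => by
      change _ ↔ (e.mapSubgroup L).index ≠ 0
      rw [hindex]
  rw [finiteIndexSum, finiteIndexSum, ← E.tsum_eq]
  exact tsum_congr fun L => congrArg f (hindex L.1).symm

lemma isEmpty_embedding_of_index_eq_zero [Group G] {X : Type*} [Finite X] {L : Subgroup G}
    (hL : L.index = 0) : IsEmpty (G ⧸ L ↪ X) := by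
  refine ⟨fun e => ?_⟩
  have hfin : Finite (G ⧸ L) := Finite.of_injective e e.injective
  exact (Subgroup.finiteIndex_iff_finite_quotient.2 hfin).index_ne_zero hL

lemma tsum_embedding_orbitWeightSum_compl [Group G] {L : Subgroup G} (hL : L.index ≠ 0) (n : ℕ)
    (x : ℝ≥0∞) :
    ∑' e : G ⧸ L ↪ Fin n, orbitWeightSum G {y // y ∉ Set.range e} x =
      n.descFactorial L.index * orbitWeightSum G (Fin (n - L.index)) x := by
  classical
  have : Finite (G ⧸ L) := Subgroup.finiteIndex_iff_finite_quotient.1 ⟨hL⟩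
  have := Fintype.ofFinite (G ⧸ L)
  have hcard : Fintype.card (G ⧸ L) = L.index := by
    rw [Subgroup.index, Nat.card_eq_fintype_card]
  have hcompl (e : G ⧸ L ↪ Fin n) :
      orbitWeightSum G {y // y ∉ Set.range e} x = orbitWeightSum G (Fin (n - L.index)) x := by
    refine orbitWeightSum_congr (Fintype.equivFinOfCardEq ?_) x
    rw [Fintype.card_subtype_compl, Fintype.card_fin, ← hcard,
      Fintype.card_congr (Equiv.ofInjective e e.injective)]
  simp_rw [hcompl]
  rw [tsum_fintype, Finset.sum_const, Finset.card_univ, Fintype.card_embedding_eq, hcard]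
  simp

theorem nat_mul_orbitWeightSum_fin (G : Type*) [Group G] (n : ℕ) (x : ℝ≥0∞) :
    (n : ℝ≥0∞) * orbitWeightSum G (Fin n) x =
      x * finiteIndexSum G fun N => n.descFactorial N * orbitWeightSum G (Fin (n - N)) x := by
  have hrec := card_mul_orbitWeightSum (G := G) (X := Fin n) x
  rw [Fintype.card_fin] at hrec
  rw [hrec, finiteIndexSum, ← tsum_subtype_eq_of_support_subset (s := {L | L.index ≠ 0})]
  · congr 1
    exact tsum_congr fun L => tsum_embedding_orbitWeightSum_compl L.2 n x
  · intro L hsupp hL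
    have := isEmpty_embedding_of_index_eq_zero (X := Fin n) hL
    exact hsupp tsum_empty

lemma index_zpowers_ofAdd (m : ℤ) :
    (Subgroup.zpowers (Multiplicative.ofAdd m)).index = m.natAbs :=
  Int.index_zmultiples m

lemma exists_zpowers_ofAdd_eq_of_index_ne_zero {K : Subgroup (Multiplicative ℤ)}
    (hK : K.index ≠ 0) : ∃ m : ℕ+, Subgroup.zpowers (Multiplicative.ofAdd (m : ℤ)) = K := by
  obtain ⟨z, rfl⟩ := (Subgroup.isCyclic_iff_exists_zpowers_eq_top K).1 inferInstance
  have hz : z.toAdd.natAbs ≠ 0 := by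
    rw [← index_zpowers_ofAdd]
    exact hK
  refine ⟨⟨_, Nat.pos_of_ne_zero hz⟩, ?_⟩
  rw [PNat.mk_coe]
  rcases Int.natAbs_eq z.toAdd with h | h
  · rw [← h, ofAdd_toAdd]
  · rw [← Subgroup.zpowers_inv, ← ofAdd_neg, ← h, ofAdd_toAdd]

lemma index_eq_index_comap_inl_mul_index_map_snd [CommGroup G] [CommGroup H]
    (M : Subgroup (G × H)) :
    M.index = (M.comap (MonoidHom.inl G H)).index * (M.map (MonoidHom.snd G H)).index := by
  have hsnd : (MonoidHom.snd G H).range = ⊤ := MonoidHom.range_eq_top.2 fun k => ⟨(1, k), rfl⟩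
  have hinl : (MonoidHom.inl G H).range = (MonoidHom.snd G H).ker := by
    ext ⟨a, b⟩
    constructor
    · rintro ⟨y, hy⟩
      exact (congrArg Prod.snd hy).symm
    · intro hb
      exact ⟨a, Prod.ext rfl hb.symm⟩
  rw [Subgroup.index_map, Subgroup.index_comap, hsnd, Subgroup.index_top, mul_one, hinl,
    ← Subgroup.relIndex_sup_left, sup_comm, Subgroup.relIndex_mul_index le_sup_right]

end FiniteIndexSum

section ProdInt

variable {G : Type*} [CommGroup G]

/-- The subgroup of `G × ℤ` generated by `L × 0` and `(v, m)`: one row of a Hermite normal form.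
Every subgroup of finite index of `G × ℤ` is of this form for unique `L`, `m` and `v`. -/
noncomputable def hermiteSubgroup (L : Subgroup G) (m : ℕ+) (v : G ⧸ L) :
    Subgroup (G × Multiplicative ℤ) :=
  (Subgroup.zpowers ((v, Multiplicative.ofAdd (m : ℤ)) : (G ⧸ L) × Multiplicative ℤ)).comap
    (MonoidHom.prodMap (QuotientGroup.mk' L) (MonoidHom.id _))

lemma mem_hermiteSubgroup_iff (L : Subgroup G) (m : ℕ+) (v : G ⧸ L) (g : G) (k : ℤ) :
    (g, Multiplicative.ofAdd k) ∈ hermiteSubgroup L m v ↔ ∃ j : ℤ, v ^ j = g ∧ j * m = k := by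
  rw [hermiteSubgroup, Subgroup.mem_comap, Subgroup.mem_zpowers_iff]
  refine exists_congr fun j => ?_
  rw [Prod.ext_iff]
  simp only [Prod.pow_mk, ← ofAdd_zsmul, smul_eq_mul]
  rfl

lemma hermiteSubgroup_comap_inl (L : Subgroup G) (m : ℕ+) (v : G ⧸ L) :
    (hermiteSubgroup L m v).comap (MonoidHom.inl G (Multiplicative ℤ)) = L := by
  ext g
  change (g, Multiplicative.ofAdd 0) ∈ hermiteSubgroup L m v ↔ g ∈ L
  rw [mem_hermiteSubgroup_iff, ← QuotientGroup.eq_one_iff]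
  simp [eq_comm (a := (1 : G ⧸ L))]

lemma hermiteSubgroup_map_snd (L : Subgroup G) (m : ℕ+) (v : G ⧸ L) :
    (hermiteSubgroup L m v).map (MonoidHom.snd G (Multiplicative ℤ)) =
      Subgroup.zpowers (Multiplicative.ofAdd (m : ℤ)) := by
  ext k
  rw [Subgroup.mem_map, Subgroup.mem_zpowers_iff]
  constructor
  · rintro ⟨⟨g, k'⟩, hmem, rfl⟩
    obtain ⟨j, -, h⟩ := (mem_hermiteSubgroup_iff L m v g k'.toAdd).1 hmem
    exact ⟨j, by rw [← ofAdd_zsmul, smul_eq_mul, h]; rfl⟩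
  · rintro ⟨j, rfl⟩
    induction v using QuotientGroup.induction_on with | H v =>
    refine ⟨(v ^ j, Multiplicative.ofAdd (j * (m : ℤ))), ?_, ?_⟩
    · exact (mem_hermiteSubgroup_iff _ _ _ _ _).2 ⟨j, by simp, rfl⟩
    · rw [← ofAdd_zsmul, smul_eq_mul]
      rfl

lemma index_hermiteSubgroup (L : Subgroup G) (m : ℕ+) (v : G ⧸ L) :
    (hermiteSubgroup L m v).index = L.index * m := by
  rw [index_eq_index_comap_inl_mul_index_map_snd, hermiteSubgroup_comap_inl,
    hermiteSubgroup_map_snd, index_zpowers_ofAdd, Int.natAbs_natCast]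

lemma hermiteSubgroup_injective_pnat {L : Subgroup G} {m m' : ℕ+} {v v' : G ⧸ L}
    (h : hermiteSubgroup L m v = hermiteSubgroup L m' v') : m = m' := by
  have hindex := congrArg (fun M => (M.map (MonoidHom.snd G (Multiplicative ℤ))).index) h
  simp only [hermiteSubgroup_map_snd, index_zpowers_ofAdd, Int.natAbs_natCast] at hindex
  exact PNat.eq hindex

lemma hermiteSubgroup_injective_quotient (L : Subgroup G) (m : ℕ+) :
    Function.Injective (hermiteSubgroup L m) := by
  intro v v' h
  induction v using QuotientGroup.induction_on with | H g =>
  have hmem : (g, Multiplicative.ofAdd (m : ℤ)) ∈ hermiteSubgroup L m g :=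
    (mem_hermiteSubgroup_iff _ _ _ _ _).2 ⟨1, by simp⟩
  rw [h, mem_hermiteSubgroup_iff] at hmem
  obtain ⟨j, hj, hjm⟩ := hmem
  have hm : (m : ℤ) ≠ 0 := by exact_mod_cast m.ne_zero
  obtain rfl : j = 1 := mul_right_cancel₀ hm (by rw [hjm, one_mul])
  simpa using hj.symm

lemma hermiteSubgroup_eq_of_mem {M : Subgroup (G × Multiplicative ℤ)} {m : ℕ+} {g : G}
    (hm : Subgroup.zpowers (Multiplicative.ofAdd (m : ℤ)) =
      M.map (MonoidHom.snd G (Multiplicative ℤ)))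
    (hg : (g, Multiplicative.ofAdd (m : ℤ)) ∈ M) :
    hermiteSubgroup (M.comap (MonoidHom.inl G (Multiplicative ℤ))) m g = M := by
  have hcoset (a : G) (j : ℤ) :
      ((g : G ⧸ M.comap (MonoidHom.inl G (Multiplicative ℤ))) ^ j = a ↔
        (a, Multiplicative.ofAdd (j * m)) ∈ M) := by
    have hpow : (g, Multiplicative.ofAdd (m : ℤ)) ^ j =
        (g ^ j, Multiplicative.ofAdd (j * m)) := by
      rw [Prod.pow_mk, ← ofAdd_zsmul, smul_eq_mul]
    rw [← QuotientGroup.mk_zpow, QuotientGroup.eq, Subgroup.mem_comap,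
      ← Subgroup.mul_mem_cancel_left M (M.zpow_mem hg j), hpow]
    simp
  ext ⟨a, k⟩
  change (a, Multiplicative.ofAdd k.toAdd) ∈ _ ↔ _
  rw [mem_hermiteSubgroup_iff]
  constructor
  · rintro ⟨j, hj, hjk⟩
    rwa [hcoset, hjk] at hj
  · intro hak
    have hk : k ∈ M.map (MonoidHom.snd G (Multiplicative ℤ)) := ⟨_, hak, rfl⟩
    rw [← hm, Subgroup.mem_zpowers_iff] at hk
    obtain ⟨j, rfl⟩ := hk
    rw [← ofAdd_zsmul, smul_eq_mul] at hak ⊢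
    exact ⟨j, (hcoset a j).2 hak, rfl⟩

lemma exists_hermiteSubgroup_eq {M : Subgroup (G × Multiplicative ℤ)} (hM : M.index ≠ 0) :
    ∃ (L : Subgroup G) (m : ℕ+) (v : G ⧸ L), L.index ≠ 0 ∧ hermiteSubgroup L m v = M := by
  rw [index_eq_index_comap_inl_mul_index_map_snd] at hM
  obtain ⟨hL, hK⟩ := mul_ne_zero_iff.1 hM
  obtain ⟨m, hm⟩ := exists_zpowers_ofAdd_eq_of_index_ne_zero hK
  obtain ⟨⟨g, k⟩, hg, rfl⟩ : Multiplicative.ofAdd (m : ℤ) ∈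
      M.map (MonoidHom.snd G (Multiplicative ℤ)) := hm ▸ Subgroup.mem_zpowers _
  exact ⟨_, m, g, hL, hermiteSubgroup_eq_of_mem hm hg⟩

/-- The parametrisation of the finite-index subgroups of `G × ℤ` by `hermiteSubgroup`. -/
noncomputable def hermiteSubgroupEquiv :
    (Σ L : {L : Subgroup G // L.index ≠ 0}, ℕ+ × (G ⧸ L.1)) ≃
      {M : Subgroup (G × Multiplicative ℤ) // M.index ≠ 0} :=
  Equiv.ofBijective (fun z => ⟨hermiteSubgroup z.1.1 z.2.1 z.2.2, by
    rw [index_hermiteSubgroup]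
    exact mul_ne_zero z.1.2 z.2.1.ne_zero⟩) (by
    constructor
    · rintro ⟨⟨L, hL⟩, m, v⟩ ⟨⟨L', hL'⟩, m', v'⟩ h
      have h' : hermiteSubgroup L m v = hermiteSubgroup L' m' v' := Subtype.ext_iff.1 h
      obtain rfl : L = L' := by
        rw [← hermiteSubgroup_comap_inl L m v, h', hermiteSubgroup_comap_inl]
      obtain rfl := hermiteSubgroup_injective_pnat h'
      obtain rfl := hermiteSubgroup_injective_quotient L m h'
      rfl
    · rintro ⟨M, hM⟩
      obtain ⟨L, m, v, hL, rfl⟩ := exists_hermiteSubgroup_eq hM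
      exact ⟨⟨⟨L, hL⟩, m, v⟩, rfl⟩)

lemma index_hermiteSubgroupEquiv (z : Σ L : {L : Subgroup G // L.index ≠ 0}, ℕ+ × (G ⧸ L.1)) :
    (hermiteSubgroupEquiv z).1.index = z.1.1.index * z.2.1 :=
  index_hermiteSubgroup _ _ _

theorem finiteIndexSum_prod_int (f : ℕ → ℝ≥0∞) :
    finiteIndexSum (G × Multiplicative ℤ) f =
      ∑' m : ℕ+, finiteIndexSum G fun d => (d : ℝ≥0∞) * f (d * m) := by
  unfold finiteIndexSum
  rw [← hermiteSubgroupEquiv.tsum_eq]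
  simp_rw [index_hermiteSubgroupEquiv]
  rw [ENNReal.tsum_sigma', ENNReal.tsum_comm]
  refine tsum_congr fun L => ?_
  rw [ENNReal.tsum_prod']
  refine tsum_congr fun m => ?_
  have : Finite (G ⧸ L.1) := Subgroup.finiteIndex_iff_finite_quotient.1 ⟨L.2⟩
  have := Fintype.ofFinite (G ⧸ L.1)
  simp only [tsum_fintype, Finset.sum_const, Finset.card_univ, Subgroup.index,
    Nat.card_eq_fintype_card, nsmul_eq_mul]

end ProdInt

/-- `∑_δ δ₁^(ℓ-1) δ₂^(ℓ-2) ⋯ δ_ℓ^0 f(δ₁⋯δ_ℓ)`, where `δ` runs over the diagonals of Hermite normal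
forms and the weight is the number of normal forms with that diagonal. -/
noncomputable def diagonalSum (ℓ : ℕ) (f : ℕ → ℝ≥0∞) : ℝ≥0∞ :=
  ∑' δ : Fin ℓ → ℕ+, (∏ i, ((δ i : ℕ) : ℝ≥0∞) ^ (ℓ - 1 - (i : ℕ))) * f (∏ i, (δ i : ℕ))

lemma diagonalSum_succ (ℓ : ℕ) (f : ℕ → ℝ≥0∞) :
    diagonalSum (ℓ + 1) f = ∑' m : ℕ+, diagonalSum ℓ fun d => (d : ℝ≥0∞) * f (d * m) := by
  unfold diagonalSum
  rw [← (Fin.snocEquiv fun _ : Fin (ℓ + 1) => ℕ+).tsum_eq, ENNReal.tsum_prod']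
  refine tsum_congr fun m => tsum_congr fun δ => ?_
  simp only [Fin.snocEquiv, Equiv.coe_fn_mk, Fin.prod_univ_castSucc, Fin.snoc_castSucc,
    Fin.snoc_last, Fin.val_castSucc, Fin.val_last, Nat.add_sub_cancel, Nat.sub_self, pow_zero,
    mul_one]
  rw [← mul_assoc]
  congr 1
  push_cast
  rw [← Finset.prod_mul_distrib]
  refine Finset.prod_congr rfl fun i _ => ?_
  rw [← pow_succ]
  congr 1
  omega

/-- `ℤ^ℓ × ℤ ≃ ℤ^(ℓ+1)`, written multiplicatively. -/
noncomputable def snocMulEquiv (ℓ : ℕ) :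
    (Fin ℓ → Multiplicative ℤ) × Multiplicative ℤ ≃* (Fin (ℓ + 1) → Multiplicative ℤ) where
  toFun z := Fin.snoc z.1 z.2
  invFun w := (fun i => w i.castSucc, w (Fin.last ℓ))
  left_inv z := by ext <;> simp
  right_inv w := by
    ext i
    refine Fin.lastCases ?_ (fun i => ?_) i <;> simp
  map_mul' z w := by
    ext i
    refine Fin.lastCases ?_ (fun i => ?_) i <;> simp

lemma finiteIndexSum_of_subsingleton (G : Type*) [Group G] [Subsingleton G] (f : ℕ → ℝ≥0∞) :
    finiteIndexSum G f = f 1 := by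
  have hindex (L : Subgroup G) : L.index = 1 := by
    rw [Subgroup.index_eq_one]
    exact Subsingleton.elim _ _
  let : Unique {L : Subgroup G // L.index ≠ 0} :=
    ⟨⟨⟨⊤, by simp⟩⟩, fun _ => Subtype.ext (Subsingleton.elim _ _)⟩
  rw [finiteIndexSum, tsum_fintype, Fintype.sum_unique, hindex]

theorem finiteIndexSum_int_pow (ℓ : ℕ) (f : ℕ → ℝ≥0∞) :
    finiteIndexSum (Fin ℓ → Multiplicative ℤ) f = diagonalSum ℓ f := by
  induction ℓ generalizing f with
  | zero => simp [finiteIndexSum_of_subsingleton, diagonalSum, tsum_fintype]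
  | succ ℓ ih =>
    rw [← finiteIndexSum_congr (snocMulEquiv ℓ), finiteIndexSum_prod_int, diagonalSum_succ]
    exact tsum_congr fun m => ih _

/-! ### Commuting tuples -/

section CommTuple

variable {ℓ : ℕ} {K : Type*} [Group K]

/-- Tuples of pairwise commuting elements of a group. -/
abbrev CommTuple (ℓ : ℕ) (K : Type*) [Group K] :=
  {σ : Fin ℓ → K // ∀ i j, σ i * σ j = σ j * σ i}

lemma CommTuple.commute_zpowersHom (σ : CommTuple ℓ K) :
    Pairwise fun i j => ∀ a b : Multiplicative ℤ,
      Commute (zpowersHom K (σ.1 i) a) (zpowersHom K (σ.1 j) b) := fun i j _ _ _ => by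
  have h : Commute (σ.1 i) (σ.1 j) := σ.2 i j
  simpa only [zpowersHom_apply] using h.zpow_zpow _ _

/-- Commuting tuples are homomorphisms from `ℤ^ℓ`. -/
noncomputable def commTupleEquiv (ℓ : ℕ) (K : Type*) [Group K] :
    CommTuple ℓ K ≃ ((Fin ℓ → Multiplicative ℤ) →* K) :=
  Equiv.trans
    { toFun := fun σ => ⟨fun i => zpowersHom K (σ.1 i), σ.commute_zpowersHom⟩
      invFun := fun φ => ⟨fun i => (zpowersHom K).symm (φ.1 i), fun i j => by
        obtain rfl | hij := eq_or_ne i j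
        · rfl
        · exact φ.2 hij _ _⟩
      left_inv := fun σ => Subtype.ext (funext fun i => (zpowersHom K).symm_apply_apply (σ.1 i))
      right_inv := fun φ => Subtype.ext (funext fun i => (zpowersHom K).apply_symm_apply (φ.1 i)) }
    (MonoidHom.noncommPiCoprodEquiv (N := fun _ : Fin ℓ => Multiplicative ℤ))

lemma range_commTupleEquiv (σ : CommTuple ℓ K) :
    (commTupleEquiv ℓ K σ).range = Subgroup.closure (Set.range σ.1) :=
  calc (commTupleEquiv ℓ K σ).range
      = ⨆ i, (zpowersHom K (σ.1 i)).range :=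
        MonoidHom.noncommPiCoprod_range (H := fun _ : Fin ℓ => Multiplicative ℤ)
          (fun i => zpowersHom K (σ.1 i)) (hcomm := σ.commute_zpowersHom)
    _ = Subgroup.closure (Set.range σ.1) := by
        simp only [Subgroup.range_zpowersHom, Subgroup.zpowers_eq_closure,
          ← Subgroup.closure_iUnion, Set.iUnion_singleton_eq_range]

end CommTuple

lemma kappa_eq_numOrbits {ℓ n : ℕ} (σ : CommTuple ℓ (Equiv.Perm (Fin n))) :
    kappa σ.1 = numOrbits (commTupleEquiv ℓ _ σ) := by
  rw [numOrbits, range_commTupleEquiv, kappa]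

lemma kappa_le {ℓ n : ℕ} (σ : Fin ℓ → Equiv.Perm (Fin n)) : kappa σ ≤ n := by
  unfold kappa
  simpa using Nat.card_le_card_of_surjective
    (Quotient.mk (MulAction.orbitRel (Subgroup.closure (Set.range σ)) (Fin n)))
    Quotient.mk_surjective

open Classical in
lemma sum_Acount_mul (ℓ n : ℕ) (x : ℝ) :
    ∑ k ∈ Finset.range (n + 1), (Acount ℓ n k : ℝ) * x ^ k =
      ∑ σ : CommTuple ℓ (Equiv.Perm (Fin n)), x ^ kappa σ.1 := by
  rw [← Finset.sum_fiberwise_of_maps_to (s := Finset.univ) (t := Finset.range (n + 1))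
    (g := fun σ : CommTuple ℓ (Equiv.Perm (Fin n)) => kappa σ.1)
    (fun σ _ => Finset.mem_range.2 (Nat.lt_succ_of_le (kappa_le σ.1)))]
  refine Finset.sum_congr rfl fun k _ => ?_
  rw [Finset.sum_congr rfl (g := fun _ => x ^ k) (fun σ hσ => by rw [(Finset.mem_filter.1 hσ).2]),
    Finset.sum_const, nsmul_eq_mul, Acount, ← Fintype.card_subtype, ← Nat.card_eq_fintype_card]
  congr 2
  exact Nat.card_congr (Equiv.subtypeSubtypeEquivSubtypeInter _ (fun σ => kappa σ = k)).symm

lemma sum_Acount_mul_eq_factorial_mul_Hpoly (ℓ n : ℕ) (x : ℝ) :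
    ∑ k ∈ Finset.range (n + 1), (Acount ℓ n k : ℝ) * x ^ k = n.factorial * Hpoly ℓ n x := by
  rw [Hpoly, ← mul_assoc, mul_one_div_cancel (by positivity), one_mul]

lemma orbitWeightSum_int_pow (ℓ n : ℕ) {x : ℝ} (hx : 0 ≤ x) :
    orbitWeightSum (Fin ℓ → Multiplicative ℤ) (Fin n) (ENNReal.ofReal x) =
      ENNReal.ofReal (n.factorial * Hpoly ℓ n x) := by
  classical
  rw [← sum_Acount_mul_eq_factorial_mul_Hpoly, sum_Acount_mul,
    ENNReal.ofReal_sum_of_nonneg (fun _ _ => by positivity), orbitWeightSum,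
    ← (commTupleEquiv ℓ (Equiv.Perm (Fin n))).tsum_eq, tsum_fintype]
  refine Finset.sum_congr rfl fun σ _ => ?_
  rw [← kappa_eq_numOrbits, ENNReal.ofReal_pow hx]

lemma Hpoly_zero (ℓ : ℕ) (x : ℝ) : Hpoly ℓ 0 x = 1 := by
  classical
  have hkappa (σ : Fin ℓ → Equiv.Perm (Fin 0)) : kappa σ = 0 := Nat.le_zero.1 (kappa_le σ)
  let : Unique (CommTuple ℓ (Equiv.Perm (Fin 0))) :=
    ⟨⟨⟨1, fun _ _ => rfl⟩⟩, fun _ => Subsingleton.elim _ _⟩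
  have hsum := sum_Acount_mul_eq_factorial_mul_Hpoly ℓ 0 x
  rw [sum_Acount_mul, Fintype.sum_unique, hkappa] at hsum
  simpa using hsum.symm

lemma Hpoly_nonneg (ℓ n : ℕ) {x : ℝ} (hx : 0 ≤ x) : 0 ≤ Hpoly ℓ n x := by
  unfold Hpoly
  positivity

theorem nat_mul_Hpoly_eq_diagonalSum (ℓ n : ℕ) {x : ℝ} (hx : 0 ≤ x) :
    (n : ℝ≥0∞) * ENNReal.ofReal (n.factorial * Hpoly ℓ n x) =
      ENNReal.ofReal x * diagonalSum ℓ fun N => n.descFactorial N *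
        ENNReal.ofReal ((n - N).factorial * Hpoly ℓ (n - N) x) := by
  have hrec := nat_mul_orbitWeightSum_fin (Fin ℓ → Multiplicative ℤ) n (ENNReal.ofReal x)
  simpa only [orbitWeightSum_int_pow ℓ _ hx, finiteIndexSum_int_pow] using hrec

/-! ### Staircase series near zero -/

/-- The series `∑_{n ≥ 1} n ^ p * r ^ n`, indexed from zero. -/
noncomputable def powGeomSum (p : ℕ) (r : ℝ) : ℝ := ∑' n : ℕ, ((n : ℝ) + 1) ^ p * r ^ (n + 1)

lemma summable_powGeomSum (p : ℕ) {r : ℝ} (hr : ‖r‖ < 1) :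
    Summable fun n : ℕ => ((n : ℝ) + 1) ^ p * r ^ (n + 1) := by
  have h : Summable fun n : ℕ => (n : ℝ) ^ p * r ^ n :=
    summable_pow_mul_geometric_of_norm_lt_one p hr
  simpa only [Nat.cast_add, Nat.cast_one] using (summable_nat_add_iff 1).2 h

lemma powGeomSum_nonneg (p : ℕ) {r : ℝ} (hr : 0 ≤ r) : 0 ≤ powGeomSum p r :=
  tsum_nonneg fun _ => by positivity

lemma hasSum_factorial_mul_choose_mul_pow (p : ℕ) {r : ℝ} (hr : ‖r‖ < 1) (a : ℝ) :
    HasSum (fun n : ℕ => p.factorial * ((n + p).choose p : ℝ) * (a * r ^ n))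
      (p.factorial * (a / (1 - r) ^ (p + 1))) := by
  have h := (summable_choose_mul_geometric_of_norm_lt_one p hr).hasSum.mul_left (p.factorial * a)
  rw [tsum_choose_mul_geometric_of_norm_lt_one p hr, mul_assoc, mul_one_div] at h
  exact h.congr_fun fun n => by ring

lemma powGeomSum_le (p : ℕ) {r : ℝ} (hr0 : 0 ≤ r) (hr1 : r < 1) :
    powGeomSum p r ≤ p.factorial * (r / (1 - r) ^ (p + 1)) := by
  have hr : ‖r‖ < 1 := by rwa [Real.norm_of_nonneg hr0]
  refine hasSum_le (fun n => ?_) (summable_powGeomSum p hr).hasSum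
    (hasSum_factorial_mul_choose_mul_pow p hr r)
  have hpow : ((n : ℝ) + 1) ^ p ≤ p.factorial * (n + p).choose p := by
    have := Nat.pow_succ_le_ascFactorial (n + 1) p
    rw [Nat.ascFactorial_eq_factorial_mul_choose] at this
    exact_mod_cast this
  rw [pow_succ']
  gcongr

lemma le_powGeomSum (p : ℕ) {r : ℝ} (hr0 : 0 ≤ r) (hr1 : r < 1) :
    p.factorial * (r ^ (p + 1) / (1 - r) ^ (p + 1)) ≤ powGeomSum p r := by
  have hr : ‖r‖ < 1 := by rwa [Real.norm_of_nonneg hr0]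
  have hsum := summable_powGeomSum p hr
  have htail := (summable_nat_add_iff p).2 hsum
  calc p.factorial * (r ^ (p + 1) / (1 - r) ^ (p + 1))
      ≤ ∑' j : ℕ, (((j + p : ℕ) : ℝ) + 1) ^ p * r ^ (j + p + 1) := by
        refine hasSum_le (fun j => ?_) (hasSum_factorial_mul_choose_mul_pow p hr (r ^ (p + 1)))
          htail.hasSum
        have hpow : (p.factorial * (j + p).choose p : ℝ) ≤ ((j + p : ℕ) : ℝ) ^ p := by
          rw [← Nat.cast_mul, ← Nat.descFactorial_eq_factorial_mul_choose]
          exact_mod_cast Nat.descFactorial_le_pow _ _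
        rw [← pow_add, add_comm (p + 1), ← add_assoc]
        gcongr
        exact hpow.trans (by gcongr; exact le_add_of_nonneg_right zero_le_one)
    _ ≤ powGeomSum p r := by
        rw [powGeomSum, ← hsum.sum_add_tsum_nat_add p]
        exact le_add_of_nonneg_left (Finset.sum_nonneg fun i _ => by positivity)

lemma le_one_add_mul_one_sub_exp_neg (t : ℝ) : t ≤ (1 + t) * (1 - exp (-t)) := by
  have hexp : (1 + t) * exp (-t) ≤ exp t * exp (-t) := by
    gcongr
    linarith [Real.add_one_le_exp t]
  rw [← Real.exp_add, add_neg_cancel, Real.exp_zero] at hexp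
  linarith

lemma exp_neg_lt_one {t : ℝ} (ht : 0 < t) : exp (-t) < 1 := by simpa using ht

lemma pow_mul_powGeomSum_exp_neg_le (p : ℕ) {t : ℝ} (ht : 0 < t) :
    t ^ (p + 1) * powGeomSum p (exp (-t)) ≤ p.factorial * ((p + 1).factorial * exp 1) := by
  have hr : 0 < 1 - exp (-t) := sub_pos.2 (exp_neg_lt_one ht)
  have hfac : (1 + t) ^ (p + 1) ≤ (p + 1).factorial * exp (1 + t) := by
    have := Real.pow_div_factorial_le_exp (1 + t) (by positivity) (p + 1)
    rwa [div_le_iff₀' (by positivity)] at this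
  calc t ^ (p + 1) * powGeomSum p (exp (-t))
      ≤ ((1 + t) * (1 - exp (-t))) ^ (p + 1) *
          (p.factorial * (exp (-t) / (1 - exp (-t)) ^ (p + 1))) := by
        gcongr
        · exact powGeomSum_nonneg p (exp_pos _).le
        · exact le_one_add_mul_one_sub_exp_neg t
        · exact powGeomSum_le p (exp_pos _).le (exp_neg_lt_one ht)
    _ = p.factorial * ((1 + t) ^ (p + 1) * exp (-t)) := by rw [mul_pow]; field_simp
    _ ≤ p.factorial * ((p + 1).factorial * exp (1 + t) * exp (-t)) := by gcongr
    _ = p.factorial * ((p + 1).factorial * exp 1) := by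
        rw [mul_assoc _ (exp _), ← Real.exp_add, add_neg_cancel_right]

lemma tendsto_div_one_sub_exp_neg :
    Tendsto (fun t : ℝ => t / (1 - exp (-t))) (𝓝[>] 0) (𝓝 1) := by
  have hderiv : HasDerivAt (fun t : ℝ => 1 - exp (-t)) 1 0 := by
    simpa using (hasDerivAt_neg (0 : ℝ)).exp.const_sub 1
  simpa [div_eq_mul_inv, mul_comm] using hderiv.tendsto_slope_zero_right.inv₀ one_ne_zero

lemma tendsto_pow_mul_powGeomSum_exp_neg (p : ℕ) :
    Tendsto (fun t => t ^ (p + 1) * powGeomSum p (exp (-t))) (𝓝[>] 0) (𝓝 p.factorial) := by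
  have hexp : Tendsto (fun t : ℝ => exp (-t)) (𝓝[>] 0) (𝓝 1) := by
    have h : Continuous fun t : ℝ => exp (-t) := by fun_prop
    simpa using (h.tendsto 0).mono_left nhdsWithin_le_nhds
  have hquot := tendsto_div_one_sub_exp_neg.pow (p + 1)
  have hlower : Tendsto (fun t : ℝ => (p.factorial : ℝ) *
      (exp (-t) ^ (p + 1) * (t / (1 - exp (-t))) ^ (p + 1))) (𝓝[>] 0) (𝓝 p.factorial) := by
    simpa using ((hexp.pow (p + 1)).mul hquot).const_mul (p.factorial : ℝ)
  have hupper : Tendsto (fun t : ℝ => (p.factorial : ℝ) *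
      (exp (-t) * (t / (1 - exp (-t))) ^ (p + 1))) (𝓝[>] 0) (𝓝 p.factorial) := by
    simpa using (hexp.mul hquot).const_mul (p.factorial : ℝ)
  refine tendsto_of_tendsto_of_tendsto_of_le_of_le' hlower hupper ?_ ?_ <;>
    filter_upwards [self_mem_nhdsWithin] with t (ht : 0 < t)
  · have h := mul_le_mul_of_nonneg_left (le_powGeomSum p (exp_pos _).le (exp_neg_lt_one ht))
      (pow_nonneg ht.le (p + 1))
    rw [div_pow]
    linear_combination h
  · have h := mul_le_mul_of_nonneg_left (powGeomSum_le p (exp_pos _).le (exp_neg_lt_one ht))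
      (pow_nonneg ht.le (p + 1))
    rw [div_pow]
    linear_combination h

lemma diagonalSum_congr (ℓ : ℕ) {f f' : ℕ → ℝ≥0∞} (h : ∀ N, N ≠ 0 → f N = f' N) :
    diagonalSum ℓ f = diagonalSum ℓ f' := by
  unfold diagonalSum
  refine tsum_congr fun δ => ?_
  rw [h _ (Finset.prod_ne_zero_iff.2 fun i _ => (δ i).ne_zero)]

lemma diagonalSum_const_mul (ℓ : ℕ) (f : ℕ → ℝ≥0∞) (a : ℝ≥0∞) :
    diagonalSum ℓ (fun N => a * f N) = a * diagonalSum ℓ f := by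
  simp only [diagonalSum, ← ENNReal.tsum_mul_left, mul_left_comm]

/-- The staircase series `Z_m^{[ℓ]}(t)` as an extended nonnegative real: collecting the factors
`δ_i ^ (m - i - 1)` leaves the power `m - ℓ` of the product `N = δ_1 ⋯ δ_ℓ` against the weights
of `diagonalSum`. -/
noncomputable def stairSeries (ℓ m : ℕ) (t : ℝ) : ℝ≥0∞ :=
  diagonalSum ℓ fun N => ENNReal.ofReal ((N : ℝ) ^ ((m : ℤ) - ℓ) * exp (-N * t))

lemma stairSeries_one (p : ℕ) {t : ℝ} (ht : 0 < t) :
    stairSeries 1 (p + 1) t = ENNReal.ofReal (powGeomSum p (exp (-t))) := by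
  have hr : ‖exp (-t)‖ < 1 := by simpa using ht
  rw [powGeomSum, ENNReal.ofReal_tsum_of_nonneg (fun n => by positivity) (summable_powGeomSum p hr),
    stairSeries, diagonalSum, ← (Equiv.funUnique (Fin 1) ℕ+).symm.tsum_eq,
    ← Equiv.pnatEquivNat.symm.tsum_eq]
  refine tsum_congr fun n => ?_
  have hexp : exp (-(n + 1) * t) = exp (-t) ^ (n + 1) := by
    rw [← Real.exp_nat_mul]; push_cast; ring_nf
  simp [← hexp]

lemma stairSeries_succ (ℓ m : ℕ) (t : ℝ) :
    stairSeries (ℓ + 1) m t =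
      ∑' k : ℕ+, ENNReal.ofReal ((k : ℝ) ^ ((m : ℤ) - (ℓ + 1))) * stairSeries ℓ m (k * t) := by
  unfold stairSeries
  rw [diagonalSum_succ]
  refine tsum_congr fun k => ?_
  rw [← diagonalSum_const_mul]
  refine diagonalSum_congr _ fun N hN => ?_
  have hN' : (N : ℝ) ≠ 0 := by exact_mod_cast hN
  rw [← ENNReal.ofReal_natCast N, ← ENNReal.ofReal_mul (by positivity),
    ← ENNReal.ofReal_mul (by positivity)]
  have hpow : (N : ℝ) ^ ((m : ℤ) - ℓ) = N * (N : ℝ) ^ ((m : ℤ) - (ℓ + 1)) := by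
    rw [← zpow_one_add₀ hN']; congr 1; ring
  have hexp : -((N : ℝ) * k) * t = -N * (k * t) := by ring
  congr 1
  push_cast
  rw [hpow, mul_zpow, hexp]
  ring

lemma zetaR_natCast (j : ℕ) : zetaR j = ∑' k : ℕ+, 1 / ((k : ℕ) : ℝ) ^ j := by
  rw [zetaR, ← Equiv.pnatEquivNat.symm.tsum_eq]
  simp [Real.rpow_natCast]

lemma summable_one_div_pnat_pow {j : ℕ} (hj : 2 ≤ j) :
    Summable fun k : ℕ+ => 1 / ((k : ℕ) : ℝ) ^ j :=
  (Real.summable_one_div_nat_pow.2 hj).comp_injective PNat.coe_injective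

lemma zetaR_pos {j : ℕ} (hj : 2 ≤ j) : 0 < zetaR j := by
  rw [zetaR_natCast]
  exact (summable_one_div_pnat_pow hj).tsum_pos (fun k => by positivity) 1 (by simp)

lemma zpow_stair_exponent (k : ℕ+) (p ℓ : ℕ) :
    (k : ℝ) ^ (((p + 1 : ℕ) : ℤ) - (ℓ + 1)) = 1 / (k : ℝ) ^ (ℓ + 1) * (k : ℝ) ^ (p + 1) := by
  have hk : (k : ℝ) ≠ 0 := by exact_mod_cast k.ne_zero
  rw [← Nat.cast_add_one ℓ, zpow_sub₀ hk, zpow_natCast, zpow_natCast]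
  ring

lemma exists_stairSeries_le (p : ℕ) {ℓ : ℕ} (hℓ : 1 ≤ ℓ) :
    ∃ C, ∀ t, 0 < t → stairSeries ℓ (p + 1) t ≤ ENNReal.ofReal (C / t ^ (p + 1)) := by
  induction ℓ, hℓ using Nat.le_induction with
  | base =>
    refine ⟨p.factorial * ((p + 1).factorial * exp 1), fun t ht => ?_⟩
    rw [stairSeries_one p ht]
    refine ENNReal.ofReal_le_ofReal ?_
    rw [le_div_iff₀' (by positivity)]
    exact pow_mul_powGeomSum_exp_neg_le p ht
  | succ ℓ hℓ ih =>
    obtain ⟨C, hC⟩ := ih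
    refine ⟨zetaR ((ℓ + 1 : ℕ) : ℝ) * C, fun t ht => ?_⟩
    have hzeta := summable_one_div_pnat_pow (j := ℓ + 1) (by omega)
    rw [stairSeries_succ, mul_div_assoc, ENNReal.ofReal_mul (zetaR_pos (by omega)).le,
      zetaR_natCast, ENNReal.ofReal_tsum_of_nonneg (fun k => by positivity) hzeta,
      ← ENNReal.tsum_mul_right]
    refine ENNReal.tsum_le_tsum fun k => ?_
    have hk : (0 : ℝ) < k := by exact_mod_cast k.pos
    refine (mul_le_mul_right (hC _ (mul_pos hk ht)) _).trans_eq ?_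
    rw [← ENNReal.ofReal_mul (by positivity), ← ENNReal.ofReal_mul (by positivity),
      zpow_stair_exponent, mul_pow]
    congr 1
    field_simp

lemma stairSeries_ne_top (p : ℕ) {ℓ : ℕ} (hℓ : 1 ≤ ℓ) {t : ℝ} (ht : 0 < t) :
    stairSeries ℓ (p + 1) t ≠ ∞ := by
  obtain ⟨C, hC⟩ := exists_stairSeries_le p hℓ
  exact ne_top_of_le_ne_top ENNReal.ofReal_ne_top (hC t ht)

lemma exists_pow_mul_stairSeries_le (p : ℕ) {ℓ : ℕ} (hℓ : 1 ≤ ℓ) :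
    ∃ C, ∀ t, 0 < t → |t ^ (p + 1) * (stairSeries ℓ (p + 1) t).toReal| ≤ C := by
  obtain ⟨C, hC⟩ := exists_stairSeries_le p hℓ
  refine ⟨max C 0, fun t ht => ?_⟩
  have h := ENNReal.toReal_mono ENNReal.ofReal_ne_top (hC t ht)
  rw [ENNReal.toReal_ofReal'] at h
  rw [abs_of_nonneg (by positivity), ← le_div_iff₀' (by positivity)]
  refine h.trans (max_le ?_ (by positivity))
  gcongr
  exact le_max_left _ _

lemma pow_mul_stairSeries_succ (p : ℕ) {ℓ : ℕ} (hℓ : 1 ≤ ℓ) {t : ℝ} (ht : 0 < t) :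
    t ^ (p + 1) * (stairSeries (ℓ + 1) (p + 1) t).toReal = ∑' k : ℕ+, 1 / ((k : ℕ) : ℝ) ^ (ℓ + 1) *
      ((k * t) ^ (p + 1) * (stairSeries ℓ (p + 1) (k * t)).toReal) := by
  have hk (k : ℕ+) : (0 : ℝ) < k := by exact_mod_cast k.pos
  rw [stairSeries_succ, ENNReal.tsum_toReal_eq fun k => ENNReal.mul_ne_top ENNReal.ofReal_ne_top
    (stairSeries_ne_top p hℓ (mul_pos (hk k) ht)), ← tsum_mul_left]
  refine tsum_congr fun k => ?_
  rw [ENNReal.toReal_mul, ENNReal.toReal_ofReal (by positivity), zpow_stair_exponent, mul_pow]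
  ring

lemma tendsto_tsum_mul_comp_mul {w : ℕ+ → ℝ} (hw : Summable w) {g : ℝ → ℝ} {C L : ℝ}
    (hbound : ∀ t, 0 < t → |g t| ≤ C) (hlim : Tendsto g (𝓝[>] 0) (𝓝 L)) :
    Tendsto (fun t => ∑' k : ℕ+, w k * g (k * t)) (𝓝[>] 0) (𝓝 ((∑' k, w k) * L)) := by
  have hk (k : ℕ+) : (0 : ℝ) < k := by exact_mod_cast k.pos
  rw [← tsum_mul_right]
  refine tendsto_tsum_of_dominated_convergence (hw.abs.mul_right C) (fun k => ?_) ?_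
  · refine (hlim.comp (tendsto_nhdsWithin_iff.2 ⟨?_, ?_⟩)).const_mul _
    · have h : Continuous fun t : ℝ => (k : ℝ) * t := by fun_prop
      simpa using (h.tendsto 0).mono_left nhdsWithin_le_nhds
    · filter_upwards [self_mem_nhdsWithin] with t ht using mul_pos (hk k) ht
  · filter_upwards [self_mem_nhdsWithin] with t ht k
    rw [Real.norm_eq_abs, abs_mul]
    exact mul_le_mul_of_nonneg_left (hbound _ (mul_pos (hk k) ht)) (abs_nonneg _)

theorem tendsto_pow_mul_stairSeries (p : ℕ) {ℓ : ℕ} (hℓ : 1 ≤ ℓ) :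
    Tendsto (fun t => t ^ (p + 1) * (stairSeries ℓ (p + 1) t).toReal) (𝓝[>] 0)
      (𝓝 (p.factorial * ∏ j ∈ Finset.Icc 2 ℓ, zetaR j)) := by
  induction ℓ, hℓ using Nat.le_induction with
  | base =>
    simp only [Nat.lt_add_one, Finset.Icc_eq_empty_of_lt, Finset.prod_empty, mul_one]
    refine (tendsto_pow_mul_powGeomSum_exp_neg p).congr' ?_
    filter_upwards [self_mem_nhdsWithin] with t ht
    rw [stairSeries_one p ht, ENNReal.toReal_ofReal (powGeomSum_nonneg p (exp_pos _).le)]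
  | succ ℓ hℓ ih =>
    obtain ⟨C, hC⟩ := exists_pow_mul_stairSeries_le p hℓ
    have h := tendsto_tsum_mul_comp_mul (summable_one_div_pnat_pow (j := ℓ + 1) (by omega)) hC ih
    rw [← zetaR_natCast, mul_left_comm, mul_comm (zetaR _),
      ← Finset.prod_Icc_succ_top (by omega)] at h
    refine h.congr' ?_
    filter_upwards [self_mem_nhdsWithin] with t ht using (pow_mul_stairSeries_succ p hℓ ht).symm

lemma Zstair_eq_toReal_stairSeries (ℓ m : ℕ) (t : ℝ) :
    Zstair ℓ m t = (stairSeries ℓ m t).toReal := by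
  unfold Zstair Zr stairSeries diagonalSum
  rw [ENNReal.tsum_toReal_eq fun δ => ENNReal.mul_ne_top (ENNReal.prod_ne_top fun i _ =>
    ENNReal.pow_ne_top (ENNReal.natCast_ne_top _)) ENNReal.ofReal_ne_top]
  refine tsum_congr fun δ => ?_
  rw [ENNReal.toReal_mul, ENNReal.toReal_ofReal (by positivity), ENNReal.toReal_prod, ← mul_assoc]
  push_cast
  congr 1
  rw [← Finset.prod_zpow, ← Finset.prod_mul_distrib]
  refine Finset.prod_congr rfl fun i _ => ?_
  have hδ : ((δ i : ℕ) : ℝ) ≠ 0 := by exact_mod_cast (δ i).ne_zero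
  have hi : (ℓ - 1 - (i : ℕ) : ℕ) = (ℓ : ℤ) - 1 - (i : ℕ) := by omega
  rw [ENNReal.toReal_pow, ENNReal.toReal_natCast, ← zpow_natCast, ← zpow_add₀ hδ,
    ← Real.rpow_intCast, hi]
  congr 1
  push_cast
  ring

/-! ### Subgroup counts -/

/-- The number of subgroups of index `N` in `ℤ ^ ℓ`: the weight that `diagonalSum` gives to the
product `N = δ_1 ⋯ δ_ℓ`. -/
noncomputable def subgroupCount (ℓ N : ℕ) : ℝ := (diagonalSum ℓ (Pi.single N 1)).toReal

lemma subgroupCount_nonneg (ℓ N : ℕ) : 0 ≤ subgroupCount ℓ N := ENNReal.toReal_nonneg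

lemma diagonalSum_eq_tsum_single (ℓ : ℕ) (f : ℕ → ℝ≥0∞) :
    diagonalSum ℓ f = ∑' N, diagonalSum ℓ (Pi.single N 1) * f N := by
  unfold diagonalSum
  simp_rw [← ENNReal.tsum_mul_right]
  rw [ENNReal.tsum_comm]
  refine tsum_congr fun δ => ?_
  rw [tsum_eq_single (∏ i, (δ i : ℕ)) fun N hN => by rw [Pi.single_eq_of_ne hN.symm]; simp]
  simp

lemma diagonalSum_single_zero (ℓ : ℕ) : diagonalSum ℓ (Pi.single 0 1) = 0 := by
  rw [diagonalSum_congr ℓ fun M hM => Pi.single_eq_of_ne hM 1]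
  simp [diagonalSum]

lemma subgroupCount_zero (ℓ : ℕ) : subgroupCount ℓ 0 = 0 := by
  rw [subgroupCount, diagonalSum_single_zero, ENNReal.toReal_zero]

lemma diagonalSum_single_ne_top {ℓ : ℕ} (hℓ : 1 ≤ ℓ) (N : ℕ) :
    diagonalSum ℓ (Pi.single N 1) ≠ ∞ := by
  rcases eq_or_ne N 0 with rfl | hN
  · simp [diagonalSum_single_zero]
  · have hfin := stairSeries_ne_top 0 hℓ one_pos
    rw [stairSeries, diagonalSum_eq_tsum_single] at hfin
    have hterm := ENNReal.ne_top_of_tsum_ne_top hfin N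
    refine fun htop => hterm ?_
    rw [htop, ENNReal.top_mul]
    simp only [ne_eq, ENNReal.ofReal_eq_zero, not_le]
    positivity

lemma diagonalSum_eq_tsum_subgroupCount {ℓ : ℕ} (hℓ : 1 ≤ ℓ) (f : ℕ → ℝ≥0∞) :
    diagonalSum ℓ f = ∑' N, ENNReal.ofReal (subgroupCount ℓ N) * f N := by
  rw [diagonalSum_eq_tsum_single]
  simp_rw [subgroupCount, ENNReal.ofReal_toReal (diagonalSum_single_ne_top hℓ _)]

lemma pow_le_subgroupCount (ℓ : ℕ) {N : ℕ} (hN : N ≠ 0) :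
    (N : ℝ) ^ ℓ ≤ subgroupCount (ℓ + 1) N := by
  rw [subgroupCount, ← ENNReal.ofReal_le_iff_le_toReal (diagonalSum_single_ne_top (by omega) N)]
  obtain ⟨δ, h0, hsucc⟩ : ∃ δ : Fin (ℓ + 1) → ℕ+, (δ 0 : ℕ) = N ∧ ∀ i : Fin ℓ, δ i.succ = 1 :=
    ⟨Fin.cons (⟨N, Nat.pos_of_ne_zero hN⟩ : ℕ+) fun _ => 1, rfl, fun _ => rfl⟩
  refine le_trans (le_of_eq ?_) (ENNReal.le_tsum δ)
  simp [Fin.prod_univ_succ, ENNReal.ofReal_pow, h0, hsucc]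

lemma descFactorial_mul_factorial_mul_Hpoly {n i : ℕ} (hi : i ≤ n) (ℓ : ℕ) (x : ℝ) :
    ENNReal.ofReal (subgroupCount ℓ (i + 1)) * ((n + 1).descFactorial (i + 1) *
      ENNReal.ofReal ((n - i).factorial * Hpoly ℓ (n - i) x)) =
    ENNReal.ofReal ((n + 1).factorial * (subgroupCount ℓ (i + 1) * Hpoly ℓ (n - i) x)) := by
  have hfac : (n - i).factorial * (n + 1).descFactorial (i + 1) = (n + 1).factorial := by
    have := Nat.factorial_mul_descFactorial (n := n + 1) (k := i + 1) (by omega)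
    rwa [Nat.add_sub_add_right] at this
  rw [← ENNReal.ofReal_natCast, ← ENNReal.ofReal_mul (by positivity),
    ← ENNReal.ofReal_mul (subgroupCount_nonneg _ _), ← hfac]
  congr 1
  push_cast
  ring

theorem succ_mul_Hpoly_succ {ℓ : ℕ} (hℓ : 1 ≤ ℓ) (n : ℕ) {x : ℝ} (hx : 0 ≤ x) :
    ((n : ℝ) + 1) * Hpoly ℓ (n + 1) x =
      x * ∑ i ∈ Finset.range (n + 1), subgroupCount ℓ (i + 1) * Hpoly ℓ (n - i) x := by
  have hterm (i : ℕ) : 0 ≤ subgroupCount ℓ (i + 1) * Hpoly ℓ (n - i) x :=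
    mul_nonneg (subgroupCount_nonneg _ _) (Hpoly_nonneg _ _ hx)
  have h := nat_mul_Hpoly_eq_diagonalSum ℓ (n + 1) hx
  have hsupp (N : ℕ) (hN : N ∉ Finset.range (n + 2)) : (n + 1).descFactorial N = 0 :=
    Nat.descFactorial_of_lt (by rw [Finset.mem_range] at hN; omega)
  rw [diagonalSum_eq_tsum_subgroupCount hℓ,
    tsum_eq_sum (s := Finset.range (n + 2)) fun N hN => by simp [hsupp N hN],
    Finset.sum_range_succ', subgroupCount_zero, ENNReal.ofReal_zero, zero_mul, add_zero,
    Finset.sum_congr rfl fun i hi => by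
      rw [Nat.add_sub_add_right, descFactorial_mul_factorial_mul_Hpoly
        (Nat.lt_succ_iff.1 (Finset.mem_range.1 hi)) ℓ x],
    ← ENNReal.ofReal_sum_of_nonneg fun i _ => mul_nonneg (by positivity) (hterm i),
    ← ENNReal.ofReal_mul hx, ← ENNReal.ofReal_natCast (n + 1), ← ENNReal.ofReal_mul (by positivity),
    ENNReal.ofReal_eq_ofReal_iff, ← Finset.mul_sum] at h
  · refine mul_left_cancel₀ (Nat.cast_ne_zero.2 (n + 1).factorial_ne_zero : _ ≠ (0 : ℝ)) ?_
    push_cast at h ⊢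
    linarith
  · exact mul_nonneg (by positivity) (mul_nonneg (by positivity) (Hpoly_nonneg _ _ hx))
  · exact mul_nonneg hx (Finset.sum_nonneg fun i _ => mul_nonneg (by positivity) (hterm i))

/-! ### Weights of power-law type -/

/-- The moment `∑_N d_N N ^ k e ^ (-N t)` of a weight sequence. -/
noncomputable def momentSeries (d : ℕ → ℝ) (k : ℕ) (t : ℝ) : ℝ :=
  ∑' N : ℕ, d N * (N : ℝ) ^ k * exp (-N * t)

/-- Weights `d_N ≥ 1`, supported on `N ≥ 1`, all of whose moments are finite and grow as
`t → 0+` like those of the weights `c N ^ q`. -/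
structure PowerLawWeights (d : ℕ → ℝ) (q : ℕ) (c : ℝ) : Prop where
  zero : d 0 = 0
  one_le : ∀ {N}, N ≠ 0 → 1 ≤ d N
  summable : ∀ k {t : ℝ}, 0 < t → Summable fun N : ℕ => d N * (N : ℝ) ^ k * exp (-N * t)
  const_pos : 0 < c
  tendsto : ∀ k, Tendsto (fun t => t ^ (q + k + 1) * momentSeries d k t) (𝓝[>] 0)
    (𝓝 ((q + k).factorial * c))

/-- The weights `c_N / N`, with `c_N` the number of subgroups of index `N` in `ℤ ^ ℓ`, so that
`∑ n, Hpoly ℓ n x z ^ n = exp (x ∑ N, (c_N / N) z ^ N)`. -/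
noncomputable def orbitWeight (ℓ N : ℕ) : ℝ := subgroupCount ℓ N / N

lemma orbitWeight_nonneg (ℓ N : ℕ) : 0 ≤ orbitWeight ℓ N :=
  div_nonneg (subgroupCount_nonneg _ _) N.cast_nonneg

lemma one_le_orbitWeight (q : ℕ) {N : ℕ} (hN : N ≠ 0) : 1 ≤ orbitWeight (q + 2) N := by
  have hN' : (1 : ℝ) ≤ N := Nat.one_le_cast.2 (Nat.one_le_iff_ne_zero.2 hN)
  rw [orbitWeight, le_div_iff₀ (by positivity), one_mul]
  exact (le_self_pow₀ hN' q.succ_ne_zero).trans (pow_le_subgroupCount (q + 1) hN)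

lemma stairSeries_eq_tsum_orbitWeight (q k : ℕ) (t : ℝ) : stairSeries (q + 2) (q + k + 1) t =
    ∑' N : ℕ, ENNReal.ofReal (orbitWeight (q + 2) N * (N : ℝ) ^ k * exp (-N * t)) := by
  rw [stairSeries, diagonalSum_eq_tsum_subgroupCount (by omega)]
  refine tsum_congr fun N => ?_
  rw [← ENNReal.ofReal_mul (subgroupCount_nonneg _ _)]
  congr 1
  rcases eq_or_ne N 0 with rfl | hN
  · simp [subgroupCount_zero, orbitWeight]
  · have hN' : (N : ℝ) ≠ 0 := Nat.cast_ne_zero.2 hN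
    have hexponent : ((q + k + 1 : ℕ) : ℤ) - ((q + 2 : ℕ) : ℤ) = (k : ℤ) - 1 := by push_cast; ring
    rw [hexponent, zpow_sub₀ hN', zpow_natCast, zpow_one, orbitWeight]
    field_simp

lemma orbitWeight_term_nonneg (ℓ k N : ℕ) (t : ℝ) :
    0 ≤ orbitWeight ℓ N * (N : ℝ) ^ k * exp (-N * t) :=
  mul_nonneg (mul_nonneg (orbitWeight_nonneg _ _) (by positivity)) (exp_pos _).le

lemma toReal_stairSeries (q k : ℕ) (t : ℝ) :
    (stairSeries (q + 2) (q + k + 1) t).toReal = momentSeries (orbitWeight (q + 2)) k t := by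
  rw [stairSeries_eq_tsum_orbitWeight, ENNReal.tsum_toReal_eq fun _ => ENNReal.ofReal_ne_top]
  simp_rw [ENNReal.toReal_ofReal (orbitWeight_term_nonneg _ _ _ _), momentSeries]

lemma Zstair_eq_momentSeries (q k : ℕ) (t : ℝ) :
    Zstair (q + 2) ((q + k + 1 : ℕ) : ℤ) t = momentSeries (orbitWeight (q + 2)) k t := by
  rw [Zstair_eq_toReal_stairSeries, toReal_stairSeries]

lemma summable_orbitWeight (q k : ℕ) {t : ℝ} (ht : 0 < t) :
    Summable fun N : ℕ => orbitWeight (q + 2) N * (N : ℝ) ^ k * exp (-N * t) := by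
  have hfin := stairSeries_ne_top (q + k) (show 1 ≤ q + 2 by omega) ht
  rw [stairSeries_eq_tsum_orbitWeight] at hfin
  refine (ENNReal.summable_toReal hfin).congr fun N => ?_
  rw [ENNReal.toReal_ofReal (orbitWeight_term_nonneg _ _ _ _)]

theorem powerLawWeights_orbitWeight (q : ℕ) :
    PowerLawWeights (orbitWeight (q + 2)) q (∏ j ∈ Finset.Icc 2 (q + 2), zetaR j) where
  zero := by simp [orbitWeight]
  one_le := one_le_orbitWeight q
  summable k _ := summable_orbitWeight q k
  const_pos := Finset.prod_pos fun _ hj => zetaR_pos (Finset.mem_Icc.1 hj).1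
  tendsto k := by
    simpa only [toReal_stairSeries] using
      tendsto_pow_mul_stairSeries (q + k) (show 1 ≤ q + 2 by omega)

/-! ### Generating functions and Cauchy's formula -/

/-- `h` is the coefficient sequence of the power series `exp (y ∑_{N ≥ 1} d_N z ^ N)`, through the
recursion obtained by taking the logarithmic derivative. -/
structure IsExpCoeff (d : ℕ → ℝ) (y : ℝ) (h : ℕ → ℝ) : Prop where
  zero : h 0 = 1
  succ : ∀ n : ℕ, ((n : ℝ) + 1) * h (n + 1) =
    y * ∑ i ∈ Finset.range (n + 1), ((i : ℝ) + 1) * d (i + 1) * h (n - i)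

theorem isExpCoeff_Hpoly {ℓ : ℕ} (hℓ : 1 ≤ ℓ) {y : ℝ} (hy : 0 ≤ y) :
    IsExpCoeff (orbitWeight ℓ) y (fun n => Hpoly ℓ n y) where
  zero := Hpoly_zero ℓ y
  succ n := by
    rw [succ_mul_Hpoly_succ hℓ n hy]
    congr 1
    refine Finset.sum_congr rfl fun i _ => ?_
    rw [orbitWeight, Nat.cast_add_one, mul_div_cancel₀ _ (by positivity)]

section ExpCoeff

variable {d h : ℕ → ℝ} {y : ℝ} {F : ℂ → ℂ}

lemma deriv_cexp_const_mul_eventuallyEq (hF : AnalyticAt ℂ F 0) (y : ℂ) :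
    deriv (fun z => Complex.exp (y * F z)) =ᶠ[𝓝 0]
      fun z => y * (deriv F * fun z => Complex.exp (y * F z)) z := by
  filter_upwards [hF.eventually_analyticAt] with z hz
  rw [(hz.differentiableAt.hasDerivAt.const_mul y).cexp.deriv, Pi.mul_apply]
  ring

lemma IsExpCoeff.iteratedDeriv_cexp (hh : IsExpCoeff d y h) (hd : d 0 = 0)
    (hF : AnalyticAt ℂ F 0) (hcoeff : ∀ n, iteratedDeriv n F 0 = n.factorial * (d n : ℂ)) (n : ℕ) :
    iteratedDeriv n (fun z => Complex.exp (y * F z)) 0 = n.factorial * (h n : ℂ) := by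
  have hexp : AnalyticAt ℂ (fun z => Complex.exp (y * F z)) 0 := by fun_prop
  induction n using Nat.strong_induction_on with
  | _ n ih =>
  rcases n with _ | n
  · have hF0 : F 0 = 0 := by simpa [hd] using hcoeff 0
    simp [hF0, hh.zero]
  · have hrec : ((n : ℂ) + 1) * h (n + 1) =
        y * ∑ i ∈ Finset.range (n + 1), ((i : ℂ) + 1) * d (i + 1) * h (n - i) := by
      exact_mod_cast hh.succ n
    rw [iteratedDeriv_succ', (deriv_cexp_const_mul_eventuallyEq hF y).iteratedDeriv_eq n,
      iteratedDeriv_const_mul_field, iteratedDeriv_mul hF.deriv.contDiffAt hexp.contDiffAt,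
      Nat.factorial_succ, mul_comm (n + 1), Nat.cast_mul, Nat.cast_add_one, mul_assoc, hrec,
      mul_left_comm, Finset.mul_sum (Finset.range (n + 1)) _ (n.factorial : ℂ)]
    congr 1
    refine Finset.sum_congr rfl fun i hi => ?_
    have hin : i ≤ n := Nat.lt_succ_iff.1 (Finset.mem_range.1 hi)
    rw [← iteratedDeriv_succ', hcoeff, ih (n - i) (by omega),
      ← Nat.choose_mul_factorial_mul_factorial hin, Nat.factorial_succ]
    push_cast
    ring

end ExpCoeff

section CauchyIntegral

variable {g : ℂ → ℂ}

lemma periodic_comp_cexp_mul_cexp (g : ℂ → ℂ) (n : ℕ) (t : ℝ) :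
    Function.Periodic (fun θ : ℝ => g (Complex.exp (-t + θ * Complex.I)) *
      Complex.exp (-(n * θ * Complex.I))) (2 * π) := by
  intro θ
  have hpoint : Complex.exp (-t + ((θ + 2 * π : ℝ) : ℂ) * Complex.I) =
      Complex.exp (-t + θ * Complex.I) := by
    rw [← Complex.exp_periodic (-t + θ * Complex.I)]
    push_cast
    ring_nf
  have hkernel : Complex.exp (-(n * ((θ + 2 * π : ℝ) : ℂ) * Complex.I)) =
      Complex.exp (-(n * θ * Complex.I)) := by
    rw [Complex.exp_eq_exp_iff_exists_int]
    exact ⟨-n, by push_cast; ring⟩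
  simp only [hpoint, hkernel]

lemma deriv_circleMap_smul_eq (g : ℂ → ℂ) (n : ℕ) (t θ : ℝ) :
    deriv (circleMap 0 (exp (-t))) θ • ((1 / (circleMap 0 (exp (-t)) θ - 0) ^ (n + 1)) •
        g (circleMap 0 (exp (-t)) θ)) =
      Complex.I * Complex.exp (n * t) *
        (g (Complex.exp (-t + θ * Complex.I)) * Complex.exp (-(n * θ * Complex.I))) := by
  have hcircle : circleMap 0 (exp (-t)) θ = Complex.exp (-t + θ * Complex.I) := by
    simp [circleMap, Complex.exp_add]
  have hpow : Complex.exp (-t + θ * Complex.I) *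
      Complex.exp (-(((n + 1 : ℕ) : ℂ) * (-t + θ * Complex.I))) =
        Complex.exp (n * t) * Complex.exp (-(n * θ * Complex.I)) := by
    rw [← Complex.exp_add, ← Complex.exp_add]
    push_cast
    ring_nf
  rw [deriv_circleMap, hcircle, sub_zero, smul_eq_mul, smul_eq_mul, one_div, ← Complex.exp_nat_mul,
    ← Complex.exp_neg]
  linear_combination Complex.I * g (Complex.exp (-t + θ * Complex.I)) * hpow

theorem integral_comp_cexp_mul_cexp (hg : DifferentiableOn ℂ g (Metric.ball 0 1)) (n : ℕ) {t : ℝ}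
    (ht : 0 < t) {a : ℂ} (ha : iteratedDeriv n g 0 = n.factorial * a) :
    ∫ θ in (-π)..π, g (Complex.exp (-t + θ * Complex.I)) * Complex.exp (-(n * θ * Complex.I)) =
      2 * π * a * Complex.exp (-(n * t)) := by
  have hclosed : DiffContOnCl ℂ g (Metric.ball 0 (exp (-t))) := by
    refine DifferentiableOn.diffContOnCl ?_
    rw [closure_ball _ (exp_pos _).ne']
    exact hg.mono (Metric.closedBall_subset_ball (exp_neg_lt_one ht))
  have hperiod := (periodic_comp_cexp_mul_cexp g n t).intervalIntegral_add_eq (-π) 0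
  rw [show -π + 2 * π = π by ring, zero_add] at hperiod
  have hcauchy := hclosed.circleIntegral_one_div_sub_center_pow_smul (exp_pos _) n
  rw [circleIntegral] at hcauchy
  simp only [deriv_circleMap_smul_eq] at hcauchy
  rw [intervalIntegral.integral_const_mul, ← hperiod, ha, smul_eq_mul, mul_assoc] at hcauchy
  have hfac : (n.factorial : ℂ) ≠ 0 := Nat.cast_ne_zero.2 n.factorial_ne_zero
  have hcancel : Complex.exp (n * t) * (∫ θ in (-π)..π, g (Complex.exp (-t + θ * Complex.I)) *
      Complex.exp (-(n * θ * Complex.I))) = 2 * π * a := by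
    refine mul_left_cancel₀ Complex.I_ne_zero ?_
    rw [hcauchy]
    field_simp
  rw [← hcancel, mul_right_comm, ← Complex.exp_add, add_neg_cancel, Complex.exp_zero, one_mul]

end CauchyIntegral

/-- The generating function `∑_N d_N z ^ N`. -/
noncomputable def genFun (d : ℕ → ℝ) (z : ℂ) : ℂ := ∑' N : ℕ, (d N : ℂ) * z ^ N

namespace PowerLawWeights

variable {d : ℕ → ℝ} {q : ℕ} {c : ℝ}

lemma nonneg (hd : PowerLawWeights d q c) (N : ℕ) : 0 ≤ d N := by
  rcases eq_or_ne N 0 with rfl | hN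
  · exact hd.zero.ge
  · exact zero_le_one.trans (hd.one_le hN)

lemma summable_mul_pow (hd : PowerLawWeights d q c) {r : ℝ} (hr0 : 0 ≤ r) (hr1 : r < 1) :
    Summable fun N : ℕ => d N * r ^ N := by
  rcases hr0.eq_or_lt with rfl | hr0
  · refine summable_of_ne_finset_zero (s := {0}) fun N hN => ?_
    rw [zero_pow (by simpa using hN), mul_zero]
  · refine (hd.summable 0 (neg_pos.2 (Real.log_neg hr0 hr1))).congr fun N => ?_
    rw [neg_mul_neg, Real.exp_nat_mul, Real.exp_log hr0, pow_zero, mul_one]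

lemma hasFPowerSeriesOnBall_genFun (hd : PowerLawWeights d q c) :
    HasFPowerSeriesOnBall (genFun d)
      (FormalMultilinearSeries.ofScalars ℂ fun N => (d N : ℂ)) 0 1 := by
  have hradius : 1 ≤ (FormalMultilinearSeries.ofScalars ℂ fun N => (d N : ℂ)).radius := by
    refine ENNReal.le_of_forall_nnreal_lt fun r hr => ?_
    refine FormalMultilinearSeries.le_radius_of_summable_norm _ ?_
    simpa only [FormalMultilinearSeries.ofScalars_norm, Complex.norm_real,
      Real.norm_of_nonneg (hd.nonneg _)] using hd.summable_mul_pow r.coe_nonneg (mod_cast hr)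
  have hsum : genFun d = (FormalMultilinearSeries.ofScalars ℂ fun N => (d N : ℂ)).sum := by
    funext z
    simpa [genFun, FormalMultilinearSeries.ofScalarsSum] using
      (FormalMultilinearSeries.ofScalars_sum_eq (fun N => (d N : ℂ)) z).symm
  rw [hsum]
  exact (FormalMultilinearSeries.hasFPowerSeriesOnBall _ (one_pos.trans_le hradius)).mono
    one_pos hradius

lemma iteratedDeriv_genFun (hd : PowerLawWeights d q c) (n : ℕ) :
    iteratedDeriv n (genFun d) 0 = n.factorial * (d n : ℂ) := by
  have h := hd.hasFPowerSeriesOnBall_genFun.factorial_smul 1 n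
  rw [iteratedFDeriv_apply_eq_iteratedDeriv_mul_prod, Finset.prod_const_one, one_smul] at h
  rw [← h, FormalMultilinearSeries.ofScalars_apply_eq]
  simp

lemma differentiableOn_genFun (hd : PowerLawWeights d q c) :
    DifferentiableOn ℂ (genFun d) (Metric.ball 0 1) := by
  have h := hd.hasFPowerSeriesOnBall_genFun.differentiableOn
  rwa [← ENNReal.ofReal_one, Metric.eball_ofReal] at h

theorem integral_cexp_genFun (hd : PowerLawWeights d q c) {y : ℝ} {h : ℕ → ℝ}
    (hh : IsExpCoeff d y h) (n : ℕ) {t : ℝ} (ht : 0 < t) :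
    ∫ θ in (-π)..π, Complex.exp (y * genFun d (Complex.exp (-t + θ * Complex.I))) *
        Complex.exp (-(n * θ * Complex.I)) =
      2 * π * h n * Complex.exp (-(n * t)) :=
  integral_comp_cexp_mul_cexp (g := fun z => Complex.exp (y * genFun d z))
    (hd.differentiableOn_genFun.const_mul _).cexp n ht
    (hh.iteratedDeriv_cexp hd.zero hd.hasFPowerSeriesOnBall_genFun.analyticAt
      hd.iteratedDeriv_genFun n)

end PowerLawWeights

/-! ### The exponent on the circle of radius `exp (-t)` -/

lemma norm_cexp_mul_I_sub_taylor_le (z : ℝ) :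
    ‖Complex.exp (z * Complex.I) - 1 - z * Complex.I + (z : ℂ) ^ 2 / 2‖ ≤ 4 * |z| ^ 3 := by
  have hnorm : ‖(z : ℂ) * Complex.I‖ = |z| := by simp
  rcases le_total |z| 1 with hz | hz
  · have h := Complex.exp_bound (x := z * Complex.I) (hnorm.trans_le hz) (n := 3) (by norm_num)
    rw [hnorm] at h
    norm_num [Finset.sum_range_succ, Nat.factorial, mul_pow] at h
    have hsum : Complex.exp (z * Complex.I) - 1 - z * Complex.I + (z : ℂ) ^ 2 / 2 =
        Complex.exp (z * Complex.I) - (1 + z * Complex.I + -(z : ℂ) ^ 2 / 2) := by ring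
    rw [hsum]
    exact h.trans (by nlinarith [pow_nonneg (abs_nonneg z) 3])
  · calc ‖Complex.exp (z * Complex.I) - 1 - z * Complex.I + (z : ℂ) ^ 2 / 2‖
        ≤ ‖Complex.exp (z * Complex.I)‖ + ‖(1 : ℂ)‖ + ‖(z : ℂ) * Complex.I‖ +
            ‖(z : ℂ) ^ 2 / 2‖ := by
          grw [norm_add_le, norm_sub_le, norm_sub_le]
      _ = 1 + 1 + |z| + |z| ^ 2 / 2 := by
          simp [Complex.norm_exp_ofReal_mul_I]
      _ ≤ 4 * |z| ^ 3 := by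
          nlinarith [mul_nonneg (sub_nonneg.2 hz) (sub_nonneg.2 hz),
            mul_nonneg (sub_nonneg.2 hz) (sq_nonneg |z|)]

lemma cexp_add_mul_I_pow (t θ : ℝ) (N : ℕ) : Complex.exp (-t + θ * Complex.I) ^ N =
    (exp (-N * t) : ℂ) * Complex.exp (((N * θ : ℝ) : ℂ) * Complex.I) := by
  rw [← Complex.exp_nat_mul, Complex.ofReal_exp, ← Complex.exp_add]
  push_cast
  ring_nf

lemma norm_one_sub_cexp_sq (t θ : ℝ) : ‖1 - Complex.exp (-t + θ * Complex.I)‖ ^ 2 =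
    (1 - exp (-t)) ^ 2 + 2 * exp (-t) * (1 - cos θ) := by
  have hpolar : Complex.exp (-t + θ * Complex.I) =
      (exp (-t) : ℂ) * Complex.exp (θ * Complex.I) := by
    rw [Complex.exp_add, Complex.ofReal_exp, Complex.ofReal_neg]
  rw [← Complex.normSq_eq_norm_sq, Complex.normSq_apply, hpolar, Complex.sub_re, Complex.sub_im,
    Complex.re_ofReal_mul, Complex.im_ofReal_mul, Complex.exp_ofReal_mul_I_re,
    Complex.exp_ofReal_mul_I_im, Complex.one_re, Complex.one_im]
  linear_combination exp (-t) ^ 2 * Real.sin_sq_add_cos_sq θ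

lemma mul_sqrt_le_norm_one_sub_cexp {η t θ : ℝ} (hη : 0 ≤ η) (ht : 0 < t) (ht1 : t ≤ 1)
    (hθ : η * t ≤ |θ|) (hθπ : |θ| ≤ π) :
    (1 - exp (-t)) * √(1 + 4 * exp (-1) * η ^ 2 / π ^ 2) ≤
      ‖1 - Complex.exp (-t + θ * Complex.I)‖ := by
  have hr : 0 < 1 - exp (-t) := sub_pos.2 (exp_neg_lt_one ht)
  have hrt : 1 - exp (-t) ≤ t := by linarith [Real.add_one_le_exp (-t)]
  have hsq : (η * (1 - exp (-t))) ^ 2 ≤ θ ^ 2 := by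
    rw [← sq_abs θ]
    gcongr
    exact (mul_le_mul_of_nonneg_left hrt hη).trans hθ
  have hcos : 2 / π ^ 2 * (η * (1 - exp (-t))) ^ 2 ≤ 1 - cos θ := by
    have : 2 / π ^ 2 * (η * (1 - exp (-t))) ^ 2 ≤ 2 / π ^ 2 * θ ^ 2 := by gcongr
    linarith [Real.cos_le_one_sub_mul_cos_sq hθπ]
  refine le_of_sq_le_sq ?_ (norm_nonneg _)
  calc ((1 - exp (-t)) * √(1 + 4 * exp (-1) * η ^ 2 / π ^ 2)) ^ 2
      = (1 - exp (-t)) ^ 2 + 2 * exp (-1) * (2 / π ^ 2 * (η * (1 - exp (-t))) ^ 2) := by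
        rw [mul_pow, Real.sq_sqrt (by positivity)]
        ring
    _ ≤ (1 - exp (-t)) ^ 2 + 2 * exp (-t) * (1 - cos θ) := by gcongr
    _ = ‖1 - Complex.exp (-t + θ * Complex.I)‖ ^ 2 := (norm_one_sub_cexp_sq t θ).symm

/-- The increment `F (e ^ (-t + iθ)) - F (e ^ (-t))` of the generating function `F = genFun d` along
the circle of radius `e ^ (-t)`. -/
noncomputable def circleIncrement (d : ℕ → ℝ) (t θ : ℝ) : ℂ :=
  genFun d (Complex.exp (-t + θ * Complex.I)) - (momentSeries d 0 t : ℂ)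

namespace PowerLawWeights

variable {d : ℕ → ℝ} {q : ℕ} {c : ℝ}

lemma momentSeries_nonneg (hd : PowerLawWeights d q c) (k : ℕ) (t : ℝ) :
    0 ≤ momentSeries d k t :=
  tsum_nonneg fun N => mul_nonneg (mul_nonneg (hd.nonneg N) (by positivity)) (exp_pos _).le

lemma continuous_circleIncrement (hd : PowerLawWeights d q c) {t : ℝ} (ht : 0 < t) :
    Continuous (circleIncrement d t) := by
  refine Continuous.sub ?_ continuous_const
  refine hd.differentiableOn_genFun.continuousOn.comp_continuous (by fun_prop) fun θ => ?_
  rw [mem_ball_zero_iff, Complex.norm_exp]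
  simpa using ht

lemma hasSum_circleIncrement (hd : PowerLawWeights d q c) {t : ℝ} (ht : 0 < t) (θ : ℝ) :
    HasSum (fun N : ℕ => ((d N * exp (-N * t) : ℝ) : ℂ) *
      (Complex.exp (((N * θ : ℝ) : ℂ) * Complex.I) - 1)) (circleIncrement d t θ) := by
  have hsum := hd.summable 0 ht
  have hcenter := Complex.hasSum_ofReal.2 hsum.hasSum
  have hcircle : Summable fun N : ℕ => (d N : ℂ) * Complex.exp (-t + θ * Complex.I) ^ N := by
    refine Summable.of_norm (hsum.congr fun N => ?_)
    rw [norm_mul, cexp_add_mul_I_pow, norm_mul, Complex.norm_exp_ofReal_mul_I, Complex.norm_real,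
      Complex.norm_real, Real.norm_of_nonneg (hd.nonneg N), Real.norm_of_nonneg (exp_pos _).le,
      pow_zero, mul_one, mul_one]
  refine (hcircle.hasSum.sub hcenter).congr_fun fun N => ?_
  rw [cexp_add_mul_I_pow]
  push_cast
  ring

lemma norm_circleIncrement_sub_taylor_le (hd : PowerLawWeights d q c) {t : ℝ} (ht : 0 < t) (θ : ℝ) :
    ‖circleIncrement d t θ - (θ * momentSeries d 1 t : ℝ) * Complex.I +
        ((θ ^ 2 / 2 * momentSeries d 2 t : ℝ) : ℂ)‖ ≤ 4 * |θ| ^ 3 * momentSeries d 3 t := by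
  have hfirst := Complex.hasSum_ofReal.2 ((hd.summable 1 ht).hasSum.mul_left θ)
  have hsecond := Complex.hasSum_ofReal.2 ((hd.summable 2 ht).hasSum.mul_left (θ ^ 2 / 2))
  have hthird := (hd.summable 3 ht).hasSum.mul_left (4 * |θ| ^ 3)
  have hsum := ((hd.hasSum_circleIncrement ht θ).sub (hfirst.mul_right Complex.I)).add hsecond
  unfold momentSeries
  rw [← hsum.tsum_eq]
  refine tsum_of_norm_bounded hthird fun N => ?_
  have hweight : 0 ≤ d N * exp (-N * t) := mul_nonneg (hd.nonneg N) (exp_pos _).le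
  calc _ = ‖((d N * exp (-N * t) : ℝ) : ℂ) * (Complex.exp (((N * θ : ℝ) : ℂ) * Complex.I) - 1 -
        ((N * θ : ℝ) : ℂ) * Complex.I + (((N * θ : ℝ) : ℂ)) ^ 2 / 2)‖ := by
        congr 1
        push_cast
        ring
    _ ≤ d N * exp (-N * t) * (4 * |N * θ| ^ 3) := by
        rw [norm_mul, Complex.norm_real, Real.norm_of_nonneg hweight]
        gcongr
        exact norm_cexp_mul_I_sub_taylor_le (N * θ)
    _ = 4 * |θ| ^ 3 * (d N * (N : ℝ) ^ 3 * exp (-N * t)) := by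
        rw [abs_mul, Nat.abs_cast]
        ring

lemma hasSum_neg_re_circleIncrement (hd : PowerLawWeights d q c) {t : ℝ} (ht : 0 < t) (θ : ℝ) :
    HasSum (fun N : ℕ => d N * exp (-N * t) * (1 - cos (N * θ)))
      (-(circleIncrement d t θ).re) := by
  refine (Complex.hasSum_re (hd.hasSum_circleIncrement ht θ)).neg.congr_fun fun N => ?_
  rw [Complex.re_ofReal_mul, Complex.sub_re, Complex.exp_ofReal_mul_I_re, Complex.one_re]
  ring

-- Since `d N ≥ 1`, the decay is at least that of the geometric series.
lemma geometric_le_neg_re_circleIncrement (hd : PowerLawWeights d q c) {t : ℝ} (ht : 0 < t)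
    (θ : ℝ) : (1 - exp (-t))⁻¹ - ‖1 - Complex.exp (-t + θ * Complex.I)‖⁻¹ ≤
      -(circleIncrement d t θ).re := by
  have hcircle : ‖Complex.exp (-t + θ * Complex.I)‖ < 1 := by
    rw [Complex.norm_exp]
    simpa using ht
  have hgeom := (hasSum_geometric_of_lt_one (exp_pos (-t)).le (exp_neg_lt_one ht)).sub
    (Complex.hasSum_re (hasSum_geometric_of_norm_lt_one hcircle))
  have hcompare := hasSum_le (fun N => ?_) hgeom (hd.hasSum_neg_re_circleIncrement ht θ)
  · have hre := Complex.re_le_norm (1 - Complex.exp (-t + θ * Complex.I))⁻¹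
    rw [norm_inv] at hre
    linarith
  · rw [cexp_add_mul_I_pow, Complex.re_ofReal_mul, Complex.exp_ofReal_mul_I_re, ← Real.exp_nat_mul,
      mul_neg, ← neg_mul, ← mul_one_sub, mul_assoc]
    rcases eq_or_ne N 0 with rfl | hN
    · simp [hd.zero]
    · exact le_mul_of_one_le_left (mul_nonneg (exp_pos _).le (sub_nonneg.2 (Real.cos_le_one _)))
        (hd.one_le hN)

lemma exists_div_le_neg_re_circleIncrement (hd : PowerLawWeights d q c) {η : ℝ} (hη : 0 < η) :
    ∃ a > 0, ∀ t θ : ℝ, 0 < t → t ≤ 1 → η * t ≤ |θ| → |θ| ≤ π →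
      a / t ≤ -(circleIncrement d t θ).re := by
  set s : ℝ := √(1 + 4 * exp (-1) * η ^ 2 / π ^ 2) with hs
  have hs1 : 1 < s := by
    rw [hs, Real.lt_sqrt zero_le_one, one_pow]
    exact lt_add_of_pos_right 1 (by positivity)
  have hs0 : 0 < 1 - s⁻¹ := sub_pos.2 (inv_lt_one_of_one_lt₀ hs1)
  refine ⟨1 - s⁻¹, hs0, fun t θ ht ht1 hθ hθπ => ?_⟩
  have hr : 0 < 1 - exp (-t) := sub_pos.2 (exp_neg_lt_one ht)
  have hrt : 1 - exp (-t) ≤ t := by linarith [Real.add_one_le_exp (-t)]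
  calc (1 - s⁻¹) / t ≤ (1 - s⁻¹) / (1 - exp (-t)) := by gcongr
    _ = (1 - exp (-t))⁻¹ - ((1 - exp (-t)) * s)⁻¹ := by field_simp
    _ ≤ (1 - exp (-t))⁻¹ - ‖1 - Complex.exp (-t + θ * Complex.I)‖⁻¹ := by
        gcongr
        exact mul_sqrt_le_norm_one_sub_cexp hη.le ht ht1 hθ hθπ
    _ ≤ -(circleIncrement d t θ).re := hd.geometric_le_neg_re_circleIncrement ht θ

lemma mul_sub_le_neg_re_circleIncrement (hd : PowerLawWeights d q c) {t : ℝ} (ht : 0 < t) (θ : ℝ) :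
    θ ^ 2 * (momentSeries d 2 t / 2 - 4 * (|θ| * momentSeries d 3 t)) ≤
      -(circleIncrement d t θ).re := by
  have h := (Complex.re_le_norm _).trans (hd.norm_circleIncrement_sub_taylor_le ht θ)
  rw [Complex.add_re, Complex.sub_re, Complex.re_ofReal_mul, Complex.I_re, mul_zero, sub_zero,
    Complex.ofReal_re, pow_succ |θ|, sq_abs] at h
  linarith

lemma exists_sq_div_le_neg_re_circleIncrement (hd : PowerLawWeights d q c) :
    ∃ η > 0, ∃ a > 0, ∀ᶠ t in 𝓝[>] (0 : ℝ), ∀ θ : ℝ, |θ| ≤ η * t →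
      a * (θ ^ 2 / t ^ (q + 3)) ≤ -(circleIncrement d t θ).re := by
  set K₂ : ℝ := (q + 2).factorial * c
  set K₃ : ℝ := (q + 3).factorial * c
  have hK₂ : 0 < K₂ := mul_pos (by positivity) hd.const_pos
  have hK₃ : 0 < K₃ := mul_pos (by positivity) hd.const_pos
  refine ⟨K₂ / (64 * K₃), by positivity, K₂ / 8, by positivity, ?_⟩
  filter_upwards [self_mem_nhdsWithin, (hd.tendsto 2).eventually_const_lt (half_lt_self hK₂),
    (hd.tendsto 3).eventually_lt_const (lt_two_mul_self hK₃)] with t (ht : 0 < t) h₂ h₃ θ hθ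
  have hsecond : K₂ / 2 / t ^ (q + 3) ≤ momentSeries d 2 t := by
    rw [div_le_iff₀' (by positivity)]
    exact h₂.le
  have hthird : |θ| * momentSeries d 3 t ≤ K₂ / 32 / t ^ (q + 3) := by
    calc |θ| * momentSeries d 3 t ≤ K₂ / (64 * K₃) * t * (2 * K₃ / t ^ (q + 4)) := by
          gcongr
          · exact hd.momentSeries_nonneg 3 t
          · rw [le_div_iff₀' (by positivity)]
            exact h₃.le
      _ = K₂ / 32 / t ^ (q + 3) := by
          rw [pow_succ t (q + 3)]
          field_simp
          norm_num
  calc K₂ / 8 * (θ ^ 2 / t ^ (q + 3))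
      = θ ^ 2 * (K₂ / 2 / t ^ (q + 3) / 2 - 4 * (K₂ / 32 / t ^ (q + 3))) := by ring
    _ ≤ θ ^ 2 * (momentSeries d 2 t / 2 - 4 * (|θ| * momentSeries d 3 t)) := by gcongr
    _ ≤ -(circleIncrement d t θ).re := hd.mul_sub_le_neg_re_circleIncrement ht θ

end PowerLawWeights

/-! ### The saddle-point integral -/

lemma exp_neg_mul_le_div_one_add {a u : ℝ} (ha : 0 < a) (hu : 0 ≤ u) :
    exp (-(a * u)) ≤ (1 + 1 / a) / (1 + u) := by
  have hexp : exp (-(a * u)) ≤ 1 / (1 + a * u) := by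
    rw [Real.exp_neg, ← one_div]
    gcongr
    linarith [Real.add_one_le_exp (a * u)]
  refine hexp.trans ?_
  rw [div_le_div_iff₀ (by positivity) (by positivity)]
  have hexpand : (1 + 1 / a) * (1 + a * u) = 1 + u + (1 / a + a * u) := by field_simp; ring
  rw [hexpand, one_mul]
  exact le_add_of_nonneg_right (by positivity)

lemma exp_neg_div_le_factorial_div_mul_pow {a t : ℝ} (ha : 0 < a) (ht : 0 < t) (k : ℕ) :
    exp (-(a / t)) ≤ k.factorial / a ^ k * t ^ k := by
  rw [Real.exp_neg, inv_le_comm₀ (exp_pos _) (by positivity)]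
  refine le_trans (le_of_eq ?_) (Real.pow_div_factorial_le_exp (a / t) (by positivity) k)
  rw [div_pow]
  field_simp

lemma exp_neg_div_le_div_one_add {a t θ : ℝ} (ha : 0 < a) (ht : 0 < t) (ht1 : t ≤ 1) (k : ℕ)
    (hθ : |θ| ≤ π) :
    exp (-(a / t)) ≤ k.factorial / a ^ k * (1 + π ^ 2) / (1 + θ ^ 2 / t ^ k) := by
  have hθsq : θ ^ 2 ≤ π ^ 2 := by
    rw [← sq_abs θ]
    gcongr
  have hpow : t ^ k ≤ 1 := pow_le_one₀ ht.le ht1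
  rw [le_div_iff₀ (by positivity)]
  calc exp (-(a / t)) * (1 + θ ^ 2 / t ^ k)
      ≤ k.factorial / a ^ k * t ^ k * (1 + θ ^ 2 / t ^ k) := by
        gcongr
        exact exp_neg_div_le_factorial_div_mul_pow ha ht k
    _ = k.factorial / a ^ k * (t ^ k + θ ^ 2) := by field_simp
    _ ≤ k.factorial / a ^ k * (1 + π ^ 2) := by gcongr

lemma integral_cexp_neg_mul_sq_add_mul_I {a : ℝ} (ha : 0 < a) (μ : ℝ) :
    ∫ φ : ℝ, Complex.exp (-(a : ℝ) * (φ : ℂ) ^ 2 + (μ * Complex.I) * φ) =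
      ((√(π / a) * exp (-(μ ^ 2 / (4 * a))) : ℝ) : ℂ) := by
  have h := integral_cexp_quadratic (b := -(a : ℂ)) (by simpa using ha) (μ * Complex.I) 0
  simp only [add_zero] at h
  rw [h, Complex.ofReal_mul, Complex.ofReal_exp, neg_neg, ← Complex.ofReal_div,
    Real.sqrt_eq_rpow, Complex.ofReal_cpow (by positivity), mul_pow, Complex.I_sq, zero_sub]
  push_cast
  field_simp

/-- The width `t ^ ((q + 3) / 2)` of the saddle point, written with a square root. -/
noncomputable def saddleWidth (q : ℕ) (t : ℝ) : ℝ := t * √(t ^ (q + 1))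

lemma saddleWidth_pos (q : ℕ) {t : ℝ} (ht : 0 < t) : 0 < saddleWidth q t := by
  unfold saddleWidth
  positivity

lemma saddleWidth_sq (q : ℕ) {t : ℝ} (ht : 0 < t) : saddleWidth q t ^ 2 = t ^ (q + 3) := by
  rw [saddleWidth, mul_pow, Real.sq_sqrt (by positivity)]
  ring

lemma tendsto_sqrt_pow_succ (q : ℕ) : Tendsto (fun t : ℝ => √(t ^ (q + 1))) (𝓝[>] 0) (𝓝 0) := by
  have hcont : Continuous fun t : ℝ => √(t ^ (q + 1)) := by fun_prop
  simpa using (hcont.tendsto 0).mono_left nhdsWithin_le_nhds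

lemma tendsto_saddleWidth (q : ℕ) : Tendsto (saddleWidth q) (𝓝[>] 0) (𝓝[>] 0) := by
  refine tendsto_nhdsWithin_iff.2 ⟨?_, ?_⟩
  · have hid : Tendsto (fun t : ℝ => t) (𝓝[>] 0) (𝓝 0) := tendsto_id.mono_left nhdsWithin_le_nhds
    have hmul := hid.mul (tendsto_sqrt_pow_succ q)
    rwa [mul_zero] at hmul
  · filter_upwards [self_mem_nhdsWithin] with t ht using saddleWidth_pos q ht

/-- The integrand of Cauchy's formula for the `ν`-th coefficient of `exp (y F)` on the circle of
radius `e ^ (-t)`, normalised by its value at `θ = 0`. -/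
noncomputable def saddleIntegrand (d : ℕ → ℝ) (t y ν θ : ℝ) : ℂ :=
  Complex.exp (y * circleIncrement d t θ - ν * θ * Complex.I)

lemma norm_saddleIntegrand (d : ℕ → ℝ) (t y ν θ : ℝ) :
    ‖saddleIntegrand d t y ν θ‖ = exp (y * (circleIncrement d t θ).re) := by
  rw [saddleIntegrand, Complex.norm_exp, Complex.sub_re, Complex.re_ofReal_mul,
    ← Complex.ofReal_mul, Complex.re_ofReal_mul, Complex.I_re, mul_zero, sub_zero]

lemma inv_mul_integral_saddleIntegrand (d : ℕ → ℝ) (t y ν : ℝ) {p : ℝ} (hp : 0 < p) :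
    (p⁻¹ : ℂ) * ∫ θ in (-π)..π, saddleIntegrand d t y ν θ =
      ∫ φ : ℝ, (Set.Ioc (-(π / p)) (π / p)).indicator
        (fun φ => saddleIntegrand d t y ν (p * φ)) φ := by
  have hbounds : -(π / p) ≤ π / p := neg_le_self (by positivity)
  rw [integral_indicator measurableSet_Ioc, ← intervalIntegral.integral_of_le hbounds,
    intervalIntegral.integral_comp_mul_left (saddleIntegrand d t y ν) hp.ne', mul_neg,
    mul_div_cancel₀ _ hp.ne', Complex.real_smul, Complex.ofReal_inv]

namespace PowerLawWeights

variable {d : ℕ → ℝ} {q : ℕ} {c : ℝ}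

lemma exists_re_circleIncrement_le (hd : PowerLawWeights d q c) :
    ∃ a > 0, ∀ᶠ t in 𝓝[>] (0 : ℝ), ∀ θ : ℝ, |θ| ≤ π →
      a * (θ ^ 2 / t ^ (q + 3)) ≤ -(circleIncrement d t θ).re ∨
        a / t ≤ -(circleIncrement d t θ).re := by
  obtain ⟨η, hη, a, ha, hnear⟩ := hd.exists_sq_div_le_neg_re_circleIncrement
  obtain ⟨b, hb, hfar⟩ := hd.exists_div_le_neg_re_circleIncrement hη
  refine ⟨min a b, lt_min ha hb, ?_⟩
  filter_upwards [hnear, Ioc_mem_nhdsGT one_pos] with t hnear ⟨ht, ht1⟩ θ hθ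
  rcases le_total |θ| (η * t) with hηθ | hηθ
  · left
    grw [min_le_left]
    exact hnear θ hηθ
  · right
    grw [min_le_right]
    exact hfar t θ ht ht1 hηθ hθ

theorem exists_exp_re_circleIncrement_le (hd : PowerLawWeights d q c) {y₀ : ℝ} (hy₀ : 0 < y₀) :
    ∃ C, 0 ≤ C ∧ ∀ᶠ t in 𝓝[>] (0 : ℝ), ∀ θ y : ℝ, |θ| ≤ π → y₀ ≤ y →
      exp (y * (circleIncrement d t θ).re) ≤ C / (1 + θ ^ 2 / t ^ (q + 3)) := by
  obtain ⟨a, ha, hdecay⟩ := hd.exists_re_circleIncrement_le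
  set C₁ : ℝ := 1 + 1 / (y₀ * a)
  set C₂ : ℝ := (q + 3).factorial / (y₀ * a) ^ (q + 3) * (1 + π ^ 2)
  refine ⟨C₁ + C₂, by positivity, ?_⟩
  filter_upwards [hdecay, Ioc_mem_nhdsGT one_pos] with t hdecay ⟨ht, ht1⟩ θ y hθ hy
  have hy0 : 0 ≤ y := hy₀.le.trans hy
  rcases hdecay θ hθ with h | h
  · calc exp (y * (circleIncrement d t θ).re)
        ≤ exp (-(y₀ * a * (θ ^ 2 / t ^ (q + 3)))) := by
          have := mul_le_mul hy h (by positivity) hy0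
          exact exp_le_exp.2 (by linarith)
      _ ≤ C₁ / (1 + θ ^ 2 / t ^ (q + 3)) :=
          exp_neg_mul_le_div_one_add (by positivity) (by positivity)
      _ ≤ (C₁ + C₂) / (1 + θ ^ 2 / t ^ (q + 3)) := by
          gcongr
          exact le_add_of_nonneg_right (by positivity)
  · calc exp (y * (circleIncrement d t θ).re)
        ≤ exp (-(y₀ * a / t)) := by
          have := mul_le_mul hy h (by positivity) hy0
          rw [← mul_div_assoc] at this
          exact exp_le_exp.2 (by linarith)
      _ ≤ C₂ / (1 + θ ^ 2 / t ^ (q + 3)) :=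
          exp_neg_div_le_div_one_add (by positivity) ht ht1 (q + 3) hθ
      _ ≤ (C₁ + C₂) / (1 + θ ^ 2 / t ^ (q + 3)) := by
          gcongr
          exact le_add_of_nonneg_left (by positivity)

theorem integral_saddleIntegrand (hd : PowerLawWeights d q c) {y : ℝ} {h : ℕ → ℝ}
    (hh : IsExpCoeff d y h) (n : ℕ) {t : ℝ} (ht : 0 < t) :
    ∫ θ in (-π)..π, saddleIntegrand d t y n θ =
      ((2 * π * h n * exp (-(n * t) - y * momentSeries d 0 t) : ℝ) : ℂ) := by
  have hsplit (θ : ℝ) : saddleIntegrand d t y n θ =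
      Complex.exp (-(y * momentSeries d 0 t)) *
        (Complex.exp (y * genFun d (Complex.exp (-t + θ * Complex.I))) *
          Complex.exp (-(n * θ * Complex.I))) := by
    rw [saddleIntegrand, circleIncrement, ← Complex.exp_add, ← Complex.exp_add]
    push_cast
    ring_nf
  simp only [hsplit]
  rw [intervalIntegral.integral_const_mul, hd.integral_cexp_genFun hh n ht, sub_eq_add_neg, exp_add]
  push_cast
  ring

lemma tendsto_circleIncrement_sub_taylor (hd : PowerLawWeights d q c) (φ : ℝ) :
    Tendsto (fun t => circleIncrement d t (saddleWidth q t * φ) -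
      (saddleWidth q t * φ * momentSeries d 1 t : ℝ) * Complex.I +
        (((saddleWidth q t * φ) ^ 2 / 2 * momentSeries d 2 t : ℝ) : ℂ)) (𝓝[>] 0) (𝓝 0) := by
  have hbound : Tendsto (fun t => 4 * |φ| ^ 3 *
      (√(t ^ (q + 1)) * (t ^ (q + 3 + 1) * momentSeries d 3 t))) (𝓝[>] 0) (𝓝 0) := by
    simpa using ((tendsto_sqrt_pow_succ q).mul (hd.tendsto 3)).const_mul (4 * |φ| ^ 3)
  refine squeeze_zero_norm' ?_ hbound
  filter_upwards [self_mem_nhdsWithin] with t (ht : 0 < t)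
  refine (hd.norm_circleIncrement_sub_taylor_le ht _).trans_eq ?_
  rw [abs_mul, abs_of_pos (saddleWidth_pos q ht), mul_pow, pow_succ _ 2, saddleWidth_sq q ht,
    saddleWidth]
  ring

section Limit

variable {x μ : ℝ} {t y ν : ℕ → ℝ}

lemma tendsto_saddleIntegrand (hd : PowerLawWeights d q c) (ht : Tendsto t atTop (𝓝[>] 0))
    (hy : Tendsto y atTop (𝓝 x)) (hν : ∀ᶠ n in atTop, ν n = x * momentSeries d 1 (t n))
    (hμ : Tendsto (fun n => (y n - x) * momentSeries d 1 (t n) * saddleWidth q (t n)) atTop (𝓝 μ))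
    (φ : ℝ) :
    Tendsto (fun n => saddleIntegrand d (t n) (y n) (ν n) (saddleWidth q (t n) * φ)) atTop
      (𝓝 (Complex.exp (-(x * ((q + 2).factorial * c) / 2 : ℝ) * φ ^ 2 + (μ * Complex.I) * φ))) := by
  have hfirst := ((Complex.continuous_ofReal.tendsto _).comp (hμ.const_mul φ)).mul_const Complex.I
  have hsecond := (Complex.continuous_ofReal.tendsto _).comp
    (hy.mul (((hd.tendsto 2).comp ht).const_mul (φ ^ 2 / 2)))
  have hrem := ((Complex.continuous_ofReal.tendsto x).comp hy).mul
    ((hd.tendsto_circleIncrement_sub_taylor φ).comp ht)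
  have hlim := (Complex.continuous_exp.tendsto _).comp ((hfirst.sub hsecond).add hrem)
  have hvalue : ((φ * μ : ℝ) : ℂ) * Complex.I -
      ((x * (φ ^ 2 / 2 * ((q + 2).factorial * c)) : ℝ) : ℂ) + x * 0 =
        -(x * ((q + 2).factorial * c) / 2 : ℝ) * φ ^ 2 + (μ * Complex.I) * φ := by
    push_cast
    ring
  rw [hvalue] at hlim
  refine hlim.congr' ?_
  filter_upwards [(tendsto_nhdsWithin_iff.1 ht).2, hν] with n (htn : 0 < t n) hνn
  have hwidth : (saddleWidth q (t n) : ℂ) ^ 2 = (t n : ℂ) ^ (q + 3) := by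
    exact_mod_cast congrArg Complex.ofReal (saddleWidth_sq q htn)
  rw [saddleIntegrand, hνn]
  simp only [Function.comp]
  congr 1
  push_cast
  linear_combination (y n : ℂ) * φ ^ 2 / 2 * (momentSeries d 2 (t n) : ℂ) * hwidth

lemma exists_norm_indicator_saddleIntegrand_le (hd : PowerLawWeights d q c) (hx : 0 < x)
    (ht : Tendsto t atTop (𝓝[>] 0)) (hy : Tendsto y atTop (𝓝 x)) :
    ∃ C, ∀ᶠ n in atTop, ∀ φ : ℝ,
      ‖(Set.Ioc (-(π / saddleWidth q (t n))) (π / saddleWidth q (t n))).indicator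
        (fun φ => saddleIntegrand d (t n) (y n) (ν n) (saddleWidth q (t n) * φ)) φ‖ ≤
        C * (1 + φ ^ 2)⁻¹ := by
  obtain ⟨C, hC, hdom⟩ := hd.exists_exp_re_circleIncrement_le (half_pos hx)
  refine ⟨C, ?_⟩
  filter_upwards [(tendsto_nhdsWithin_iff.1 ht).2, ht.eventually hdom,
    hy.eventually_const_lt (half_lt_self hx)] with n (htn : 0 < t n) hdom hyn φ
  have hp := saddleWidth_pos q htn
  by_cases hφ : φ ∈ Set.Ioc (-(π / saddleWidth q (t n))) (π / saddleWidth q (t n))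
  · have hθ : |saddleWidth q (t n) * φ| ≤ π := by
      rw [abs_mul, abs_of_pos hp, mul_comm, ← le_div_iff₀ hp, abs_le]
      exact ⟨hφ.1.le, hφ.2⟩
    have hbound := hdom _ (y n) hθ hyn.le
    rw [mul_pow, saddleWidth_sq q htn, mul_div_cancel_left₀ _ (by positivity)] at hbound
    rwa [Set.indicator_of_mem hφ, norm_saddleIntegrand, ← div_eq_mul_inv]
  · rw [Set.indicator_of_notMem hφ, norm_zero]
    positivity

theorem tendsto_inv_mul_integral_saddleIntegrand (hd : PowerLawWeights d q c) (hx : 0 < x)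
    (ht : Tendsto t atTop (𝓝[>] 0)) (hy : Tendsto y atTop (𝓝 x))
    (hν : ∀ᶠ n in atTop, ν n = x * momentSeries d 1 (t n))
    (hμ : Tendsto (fun n => (y n - x) * momentSeries d 1 (t n) * saddleWidth q (t n)) atTop
      (𝓝 μ)) :
    Tendsto (fun n => ((saddleWidth q (t n))⁻¹ : ℂ) *
        ∫ θ in (-π)..π, saddleIntegrand d (t n) (y n) (ν n) θ) atTop
      (𝓝 (∫ φ : ℝ, Complex.exp (-(x * ((q + 2).factorial * c) / 2 : ℝ) * φ ^ 2 +
        (μ * Complex.I) * φ))) := by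
  have htpos : ∀ᶠ n in atTop, 0 < t n := (tendsto_nhdsWithin_iff.1 ht).2
  obtain ⟨C, hdom⟩ := hd.exists_norm_indicator_saddleIntegrand_le (ν := ν) hx ht hy
  refine Tendsto.congr' (htpos.mono fun n htn =>
    (inv_mul_integral_saddleIntegrand d _ _ _ (saddleWidth_pos q htn)).symm) ?_
  refine tendsto_integral_filter_of_dominated_convergence (fun φ => C * (1 + φ ^ 2)⁻¹) ?_
    (hdom.mono fun n hn => Eventually.of_forall hn) (integrable_inv_one_add_sq.const_mul C)
    (Eventually.of_forall fun φ => ?_)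
  · filter_upwards [htpos] with n htn
    have hcont := hd.continuous_circleIncrement htn
    refine Continuous.aestronglyMeasurable ?_ |>.indicator measurableSet_Ioc
    unfold saddleIntegrand
    fun_prop
  · have hwindow : Tendsto (fun n => π / saddleWidth q (t n)) atTop atTop :=
      (tendsto_inv_nhdsGT_zero.comp ((tendsto_saddleWidth q).comp ht)).const_mul_atTop pi_pos
    refine (hd.tendsto_saddleIntegrand ht hy hν hμ φ).congr' ?_
    filter_upwards [hwindow.eventually_gt_atTop |φ|] with n hn
    have hmem : φ ∈ Set.Ioc (-(π / saddleWidth q (t n))) (π / saddleWidth q (t n)) :=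
      ⟨(abs_lt.1 hn).1, (abs_lt.1 hn).2.le⟩
    rw [Set.indicator_of_mem hmem]

end Limit

end PowerLawWeights

/-! ### Coefficient ratios under exponential tilting -/

section SmallTilt

variable {ι : Type*} {l : Filter ι} {w r : ι → ℝ} {u : ℝ}

lemma tendsto_zero_of_tendsto_div (hr : ∀ᶠ i in l, 0 < r i) (hr₀ : Tendsto r l (𝓝 0))
    (hw : Tendsto (fun i => w i / r i) l (𝓝 u)) : Tendsto w l (𝓝 0) := by
  have hmul := hw.mul hr₀
  rw [mul_zero] at hmul
  exact hmul.congr' (hr.mono fun i hi => div_mul_cancel₀ _ hi.ne')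

lemma abs_exp_sub_taylor_two_le {z : ℝ} (hz : |z| ≤ 1) :
    |exp z - 1 - z - z ^ 2 / 2| ≤ |z| ^ 3 := by
  have hbound := Real.exp_bound hz (n := 3) (by norm_num)
  norm_num [Finset.sum_range_succ, Nat.factorial] at hbound
  calc |exp z - 1 - z - z ^ 2 / 2| = |exp z - (1 + z + z ^ 2 / 2)| := by ring_nf
    _ ≤ |z| ^ 3 * (2 / 9) := hbound
    _ ≤ |z| ^ 3 := mul_le_of_le_one_right (by positivity) (by norm_num)

lemma tendsto_exp_sub_one_sub_div_sq (hr : ∀ᶠ i in l, 0 < r i) (hr₀ : Tendsto r l (𝓝 0))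
    (hw : Tendsto (fun i => w i / r i) l (𝓝 u)) :
    Tendsto (fun i => (exp (w i) - 1 - w i) / r i ^ 2) l (𝓝 (u ^ 2 / 2)) := by
  have hw₀ := tendsto_zero_of_tendsto_div hr hr₀ hw
  have hsmall : Tendsto (fun i => |w i| * (w i / r i) ^ 2) l (𝓝 0) := by
    simpa using hw₀.abs.mul (hw.pow 2)
  have hdiff : Tendsto (fun i => (exp (w i) - 1 - w i - w i ^ 2 / 2) / r i ^ 2) l (𝓝 0) := by
    refine squeeze_zero_norm' ?_ hsmall
    filter_upwards [hr, hw₀.abs.eventually_le_const (abs_zero.trans_lt one_pos)] with i hi hwi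
    rw [Real.norm_eq_abs, abs_div, abs_of_pos (pow_pos hi 2), div_pow, ← mul_div_assoc]
    gcongr
    calc |exp (w i) - 1 - w i - w i ^ 2 / 2| ≤ |w i| ^ 3 := abs_exp_sub_taylor_two_le hwi
      _ = |w i| * w i ^ 2 := by rw [pow_succ', sq_abs]
  have hsum := hdiff.add ((hw.pow 2).div_const 2)
  rw [zero_add] at hsum
  exact hsum.congr fun i => by ring

lemma tendsto_exp_sub_one_div (hr : ∀ᶠ i in l, 0 < r i) (hr₀ : Tendsto r l (𝓝 0))
    (hw : Tendsto (fun i => w i / r i) l (𝓝 u)) :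
    Tendsto (fun i => (exp (w i) - 1) / r i) l (𝓝 u) := by
  have hsum := ((tendsto_exp_sub_one_sub_div_sq hr hr₀ hw).mul hr₀).add hw
  rw [mul_zero, zero_add] at hsum
  refine hsum.congr' (hr.mono fun i hi => ?_)
  field_simp
  ring

end SmallTilt

namespace PowerLawWeights

variable {d : ℕ → ℝ} {q : ℕ} {c x : ℝ} {t : ℕ → ℝ} {h : ℝ → ℕ → ℝ}

theorem tendsto_normalized_coeff (hd : PowerLawWeights d q c)
    (hh : ∀ y, 0 ≤ y → IsExpCoeff d y (h y)) (hx : 0 < x) {μ : ℝ} {y : ℕ → ℝ}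
    (ht : Tendsto t atTop (𝓝[>] 0)) (hy : Tendsto y atTop (𝓝 x))
    (hν : ∀ᶠ n : ℕ in atTop, (n : ℝ) = x * momentSeries d 1 (t n))
    (hμ : Tendsto (fun n => (y n - x) * momentSeries d 1 (t n) * saddleWidth q (t n)) atTop
      (𝓝 μ)) :
    Tendsto (fun n => (saddleWidth q (t n))⁻¹ *
        (2 * π * h (y n) n * exp (-(n * t n) - y n * momentSeries d 0 (t n)))) atTop
      (𝓝 (√(π / (x * ((q + 2).factorial * c) / 2)) *
        exp (-(μ ^ 2 / (4 * (x * ((q + 2).factorial * c) / 2)))))) := by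
  have hc := hd.const_pos
  have hlim := hd.tendsto_inv_mul_integral_saddleIntegrand hx ht hy hν hμ
  rw [integral_cexp_neg_mul_sq_add_mul_I (by positivity)] at hlim
  have hre := (Complex.continuous_re.tendsto _).comp hlim
  rw [Complex.ofReal_re] at hre
  refine hre.congr' ?_
  filter_upwards [(tendsto_nhdsWithin_iff.1 ht).2, hy.eventually_const_le hx] with n htn hyn
  simp only [Function.comp]
  rw [hd.integral_saddleIntegrand (hh _ hyn) n htn, ← Complex.ofReal_inv, ← Complex.ofReal_mul,
    Complex.ofReal_re]

theorem tendsto_log_coeff_div_sub (hd : PowerLawWeights d q c)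
    (hh : ∀ y, 0 ≤ y → IsExpCoeff d y (h y)) (hx : 0 < x) {μ : ℝ} {y : ℕ → ℝ}
    (ht : Tendsto t atTop (𝓝[>] 0)) (hy : Tendsto y atTop (𝓝 x))
    (hν : ∀ᶠ n : ℕ in atTop, (n : ℝ) = x * momentSeries d 1 (t n))
    (hμ : Tendsto (fun n => (y n - x) * momentSeries d 1 (t n) * saddleWidth q (t n)) atTop
      (𝓝 μ)) :
    Tendsto (fun n => log (h (y n) n / h x n) - (y n - x) * momentSeries d 0 (t n)) atTop
      (𝓝 (-(μ ^ 2 / (2 * (x * ((q + 2).factorial * c)))))) := by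
  have hc := hd.const_pos
  have hnum := hd.tendsto_normalized_coeff hh hx ht hy hν hμ
  have hden := hd.tendsto_normalized_coeff hh hx (y := fun _ => x) ht tendsto_const_nhds hν
    (μ := 0) (by simp)
  have hGauss : 0 < √(π / (x * ((q + 2).factorial * c) / 2)) := by positivity
  have hlog := (hnum.div hden (by positivity)).log (by positivity)
  rw [mul_div_mul_left _ _ hGauss.ne', ← exp_sub, log_exp] at hlog
  have hvalue : -(μ ^ 2 / (4 * (x * ((q + 2).factorial * c) / 2))) -
      -((0 : ℝ) ^ 2 / (4 * (x * ((q + 2).factorial * c) / 2))) =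
        -(μ ^ 2 / (2 * (x * ((q + 2).factorial * c)))) := by ring
  rw [hvalue] at hlog
  refine hlog.congr' ?_
  filter_upwards [(tendsto_nhdsWithin_iff.1 ht).2, hnum.eventually_ne (by positivity),
    hden.eventually_ne (by positivity)] with n (htn : 0 < t n) hny hnx
  have hwidth := saddleWidth_pos q htn
  have hhy : h (y n) n ≠ 0 := fun h0 => hny (by simp [h0])
  have hhx : h x n ≠ 0 := fun h0 => hnx (by simp [h0])
  rw [Pi.div_apply, mul_div_mul_left _ _ (by positivity), mul_div_mul_comm, ← exp_sub,
    mul_div_mul_left _ _ (by positivity), log_mul (div_ne_zero hhy hhx) (exp_pos _).ne', log_exp]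
  ring

lemma tendsto_tilt_mul_momentSeries_one (hd : PowerLawWeights d q c) {u : ℝ} {w : ℕ → ℝ}
    (ht : Tendsto t atTop (𝓝[>] 0))
    (hw : Tendsto (fun n => w n / √(t n ^ (q + 1))) atTop (𝓝 u)) :
    Tendsto (fun n => (x * exp (w n) - x) * momentSeries d 1 (t n) * saddleWidth q (t n))
      atTop (𝓝 (x * u * ((q + 1).factorial * c))) := by
  have htpos : ∀ᶠ n in atTop, 0 < t n := (tendsto_nhdsWithin_iff.1 ht).2
  have hr : ∀ᶠ n in atTop, 0 < √(t n ^ (q + 1)) := htpos.mono fun n htn => by positivity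
  refine (((tendsto_exp_sub_one_div hr ((tendsto_sqrt_pow_succ q).comp ht) hw).const_mul x).mul
    ((hd.tendsto 1).comp ht)).congr' ?_
  filter_upwards [htpos, hr] with n htn _
  have hpow : t n ^ (q + 1 + 1) = √(t n ^ (q + 1)) ^ 2 * t n := by
    rw [Real.sq_sqrt (by positivity), pow_succ]
  simp only [Function.comp, saddleWidth, hpow]
  field_simp

/-- The linear term of the tilt gives the mean `x M₀(t)`; the quadratic terms of `x M₀(t) e ^ w` and
of the Gaussian factor combine to the variance. -/
theorem tendsto_log_coeff_tilt_sub (hd : PowerLawWeights d q c)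
    (hh : ∀ y, 0 ≤ y → IsExpCoeff d y (h y)) (hx : 0 < x) {u : ℝ} {w : ℕ → ℝ}
    (ht : Tendsto t atTop (𝓝[>] 0))
    (hν : ∀ᶠ n : ℕ in atTop, (n : ℝ) = x * momentSeries d 1 (t n))
    (hw : Tendsto (fun n => w n / √(t n ^ (q + 1))) atTop (𝓝 u)) :
    Tendsto (fun n => log (h (x * exp (w n)) n / h x n) - x * momentSeries d 0 (t n) * w n) atTop
      (𝓝 (x * ((q + 1).factorial * c) / ((q + 2) * (q + 1)) * u ^ 2 / 2)) := by
  have hc := hd.const_pos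
  have htpos : ∀ᶠ n in atTop, 0 < t n := (tendsto_nhdsWithin_iff.1 ht).2
  have hr : ∀ᶠ n in atTop, 0 < √(t n ^ (q + 1)) := htpos.mono fun n htn => by positivity
  have hr₀ := (tendsto_sqrt_pow_succ q).comp ht
  have hy : Tendsto (fun n => x * exp (w n)) atTop (𝓝 x) := by
    simpa using (tendsto_zero_of_tendsto_div hr hr₀ hw).rexp.const_mul x
  have hquad : Tendsto (fun n => x * momentSeries d 0 (t n) * (exp (w n) - 1 - w n)) atTop
      (𝓝 (x * (q.factorial * c) * (u ^ 2 / 2))) := by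
    refine ((((hd.tendsto 0).comp ht).const_mul x).mul
      (tendsto_exp_sub_one_sub_div_sq hr hr₀ hw)).congr' ?_
    filter_upwards [htpos] with n htn
    have hsq : √(t n ^ (q + 1)) ^ 2 = t n ^ (q + 1) := Real.sq_sqrt (by positivity)
    simp only [Function.comp, add_zero, hsq]
    field_simp
  have hsum := (hd.tendsto_log_coeff_div_sub hh hx ht hy hν
    (hd.tendsto_tilt_mul_momentSeries_one ht hw)).add hquad
  have hvalue : -((x * u * ((q + 1).factorial * c)) ^ 2 / (2 * (x * ((q + 2).factorial * c)))) +
      x * (q.factorial * c) * (u ^ 2 / 2) =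
        x * ((q + 1).factorial * c) / ((q + 2) * (q + 1)) * u ^ 2 / 2 := by
    rw [Nat.factorial_succ (q + 1), Nat.factorial_succ q]
    push_cast
    field_simp
    ring
  rw [hvalue] at hsum
  exact hsum.congr fun n => by ring

end PowerLawWeights

/-! ### The saddle point and the normalising sequences -/

namespace PowerLawWeights

variable {d : ℕ → ℝ} {q : ℕ} {c : ℝ}

lemma norm_momentSeries_term_le (hd : PowerLawWeights d q c) (k N : ℕ) {t u : ℝ} (htu : t ≤ u) :
    ‖d N * (N : ℝ) ^ k * exp (-N * u)‖ ≤ d N * (N : ℝ) ^ k * exp (-N * t) := by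
  have hdN := hd.nonneg N
  rw [Real.norm_of_nonneg (by positivity), neg_mul, neg_mul]
  gcongr

lemma antitoneOn_momentSeries (hd : PowerLawWeights d q c) (k : ℕ) :
    AntitoneOn (momentSeries d k) (Set.Ioi 0) := fun _ ht _ hu htu =>
  (hd.summable k hu).tsum_le_tsum
    (fun N => (le_abs_self _).trans (hd.norm_momentSeries_term_le k N htu)) (hd.summable k ht)

lemma continuousOn_momentSeries (hd : PowerLawWeights d q c) (k : ℕ) :
    ContinuousOn (momentSeries d k) (Set.Ioi 0) := by
  intro t (ht : 0 < t)
  have hcont : ContinuousOn (momentSeries d k) (Set.Ioi (t / 2)) :=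
    continuousOn_tsum (fun N => by fun_prop) (hd.summable k (half_pos ht)) fun N u hu =>
      hd.norm_momentSeries_term_le k N (le_of_lt hu)
  exact (hcont.continuousAt (Ioi_mem_nhds (half_lt_self ht))).continuousWithinAt

lemma tendsto_momentSeries_atTop (hd : PowerLawWeights d q c) (k : ℕ) :
    Tendsto (momentSeries d k) atTop (𝓝 0) := by
  have hterm (N : ℕ) : Tendsto (fun t => d N * (N : ℝ) ^ k * exp (-N * t)) atTop (𝓝 0) := by
    rcases N.eq_zero_or_pos with rfl | hN
    · simp [hd.zero]
    · have hexp : Tendsto (fun t : ℝ => exp (-N * t)) atTop (𝓝 0) :=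
        tendsto_exp_atBot.comp (tendsto_id.const_mul_atTop_of_neg (by simpa using hN))
      simpa using hexp.const_mul (d N * (N : ℝ) ^ k)
  have hlim := tendsto_tsum_of_dominated_convergence (hd.summable k one_pos) hterm
    ((eventually_ge_atTop 1).mono fun t ht N => hd.norm_momentSeries_term_le k N ht)
  rwa [tsum_zero] at hlim

lemma tendsto_momentSeries_nhdsGT_zero (hd : PowerLawWeights d q c) (k : ℕ) :
    Tendsto (momentSeries d k) (𝓝[>] 0) atTop := by
  have hc := hd.const_pos
  have hpow : Tendsto (fun t : ℝ => (t ^ (q + k + 1))⁻¹) (𝓝[>] 0) atTop := by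
    simp_rw [← inv_pow]
    exact (tendsto_pow_atTop (by omega)).comp tendsto_inv_nhdsGT_zero
  refine (hpow.atTop_mul_pos (by positivity) (hd.tendsto k)).congr' ?_
  filter_upwards [self_mem_nhdsWithin] with t (ht : 0 < t)
  exact inv_mul_cancel_left₀ (by positivity) _

lemma surjOn_momentSeries (hd : PowerLawWeights d q c) (k : ℕ) :
    Set.SurjOn (momentSeries d k) (Set.Ioi 0) (Set.Ioi 0) :=
  isPreconnected_Ioi.intermediate_value_Ioi (le_principal_iff.2 (Ioi_mem_atTop 0))
    (le_principal_iff.2 self_mem_nhdsWithin) (hd.continuousOn_momentSeries k)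
    (hd.tendsto_momentSeries_atTop k) (hd.tendsto_momentSeries_nhdsGT_zero k)

lemma tendsto_nhdsGT_zero_of_tendsto_momentSeries (hd : PowerLawWeights d q c) {k : ℕ}
    {ι : Type*} {l : Filter ι} {t : ι → ℝ} (ht : ∀ᶠ i in l, 0 < t i)
    (hlim : Tendsto (fun i => momentSeries d k (t i)) l atTop) : Tendsto t l (𝓝[>] 0) := by
  refine tendsto_nhdsWithin_iff.2 ⟨tendsto_order.2 ⟨fun a ha => ?_, fun a ha => ?_⟩, ht⟩
  · exact ht.mono fun i hi => ha.trans hi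
  · filter_upwards [ht, hlim.eventually_gt_atTop (momentSeries d k a)] with i hi hai
    by_contra! hle
    exact hai.not_ge (hd.antitoneOn_momentSeries k ha hi hle)

end PowerLawWeights

lemma ZstairInv_spec (q : ℕ) {u : ℝ} (hu : 0 < u) :
    0 < ZstairInv (q + 2) u ∧
      momentSeries (orbitWeight (q + 2)) 1 (ZstairInv (q + 2) u) = u := by
  have hex : ∃ t ∈ Set.Ioi (0 : ℝ), Zstair (q + 2) ((q + 2 : ℕ) : ℤ) t = u := by
    obtain ⟨t, ht, rfl⟩ := (powerLawWeights_orbitWeight q).surjOn_momentSeries 1 hu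
    exact ⟨t, ht, Zstair_eq_momentSeries q 1 t⟩
  exact ⟨Function.invFunOn_mem hex,
    (Zstair_eq_momentSeries q 1 _).symm.trans (Function.invFunOn_eq hex)⟩

lemma eventually_tseq_spec (q : ℕ) {x : ℝ} (hx : 0 < x) :
    ∀ᶠ n : ℕ in atTop, 0 < tseq (q + 2) x n ∧
      (n : ℝ) = x * momentSeries (orbitWeight (q + 2)) 1 (tseq (q + 2) x n) := by
  filter_upwards [eventually_gt_atTop 0] with n hn
  obtain ⟨hpos, heq⟩ := ZstairInv_spec q (u := n / x) (by positivity)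
  exact ⟨hpos, by rw [tseq, heq, mul_div_cancel₀ _ hx.ne']⟩

lemma tendsto_tseq (q : ℕ) {x : ℝ} (hx : 0 < x) : Tendsto (tseq (q + 2) x) atTop (𝓝[>] 0) := by
  have hspec := eventually_tseq_spec q hx
  refine (powerLawWeights_orbitWeight q).tendsto_nhdsGT_zero_of_tendsto_momentSeries (k := 1)
    (hspec.mono fun n hn => hn.1) ?_
  refine (tendsto_natCast_atTop_atTop.atTop_div_const hx).congr' ?_
  filter_upwards [hspec] with n hn
  rw [div_eq_iff hx.ne', mul_comm, ← hn.2]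

lemma tendsto_natCast_mul_tseq_pow (q : ℕ) {x : ℝ} (hx : 0 < x) :
    Tendsto (fun n : ℕ => n * tseq (q + 2) x n ^ (q + 2)) atTop (𝓝 (x * Kconst (q + 2))) := by
  refine ((((powerLawWeights_orbitWeight q).tendsto 1).comp
    (tendsto_tseq q hx)).const_mul x).congr' ?_
  filter_upwards [eventually_tseq_spec q hx] with n hn
  simp only [Function.comp]
  linear_combination -(tseq (q + 2) x n ^ (q + 2)) * hn.2

lemma Kconst_pos (ℓ : ℕ) : 0 < Kconst ℓ :=
  mul_pos (by positivity) (Finset.prod_pos fun _ hj => zetaR_pos (Finset.mem_Icc.1 hj).1)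

lemma bseq_mul_sqrt_pow (q n : ℕ) (x : ℝ) {t : ℝ} (ht : 0 < t) :
    bseq (q + 2) x n * √(t ^ (q + 1)) =
      (x * Kconst (q + 2)) ^ (1 / (2 * ((q : ℝ) + 2))) / √(((q : ℝ) + 2) * (q + 1)) *
        (n * t ^ (q + 2)) ^ (((q : ℝ) + 1) / (2 * (q + 2))) := by
  have hsqrt : √(t ^ (q + 1)) = (t ^ (q + 2)) ^ (((q : ℝ) + 1) / (2 * (q + 2))) := by
    rw [Real.sqrt_eq_rpow, ← Real.rpow_natCast_mul ht.le, ← Real.rpow_natCast_mul ht.le]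
    congr 1
    push_cast
    field_simp
  have hcast : ((q + 2 : ℕ) : ℝ) - 1 = q + 1 := by push_cast; ring
  rw [Real.mul_rpow n.cast_nonneg (by positivity), ← hsqrt, bseq, hcast]
  push_cast
  ring

/-- The limiting standard deviation of the number of orbits in units of `t_n ^ (-(ℓ - 1) / 2)`, for
`ℓ = q + 2`. -/
noncomputable def limitScale (q : ℕ) (x : ℝ) : ℝ :=
  √(x * Kconst (q + 2) / ((q + 2) * (q + 1)))

lemma limitScale_pos (q : ℕ) {x : ℝ} (hx : 0 < x) : 0 < limitScale q x := by
  have hK := Kconst_pos (q + 2)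
  unfold limitScale
  positivity

lemma limitScale_sq (q : ℕ) {x : ℝ} (hx : 0 < x) :
    limitScale q x ^ 2 = x * Kconst (q + 2) / ((q + 2) * (q + 1)) := by
  have hK := Kconst_pos (q + 2)
  exact Real.sq_sqrt (by positivity)

lemma tendsto_bseq_mul_sqrt_tseq_pow (q : ℕ) {x : ℝ} (hx : 0 < x) :
    Tendsto (fun n => bseq (q + 2) x n * √(tseq (q + 2) x n ^ (q + 1))) atTop
      (𝓝 (limitScale q x)) := by
  have hxK : 0 < x * Kconst (q + 2) := mul_pos hx (Kconst_pos _)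
  have hlim := ((tendsto_natCast_mul_tseq_pow q hx).rpow_const
    (p := ((q : ℝ) + 1) / (2 * (q + 2))) (Or.inl hxK.ne')).const_mul
      ((x * Kconst (q + 2)) ^ (1 / (2 * ((q : ℝ) + 2))) / √(((q : ℝ) + 2) * (q + 1)))
  have hexponent : 1 / (2 * ((q : ℝ) + 2)) + ((q : ℝ) + 1) / (2 * (q + 2)) = 1 / 2 := by
    field_simp
    ring
  rw [div_mul_eq_mul_div, ← Real.rpow_add hxK, hexponent, ← Real.sqrt_eq_rpow,
    ← Real.sqrt_div hxK.le] at hlim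
  refine hlim.congr' ?_
  filter_upwards [eventually_tseq_spec q hx] with n hn
  exact (bseq_mul_sqrt_pow q n x hn.1).symm

lemma bseq_pos {ℓ n : ℕ} (hℓ : 2 ≤ ℓ) (hn : 0 < n) {x : ℝ} (hx : 0 < x) : 0 < bseq ℓ x n := by
  have hK := Kconst_pos ℓ
  have hℓ' : (0 : ℝ) < ℓ - 1 := sub_pos.2 (Nat.one_lt_cast.2 hℓ)
  unfold bseq
  positivity

lemma isEquivalent_bseq_of_tendsto_div {ℓ : ℕ} (hℓ : 2 ≤ ℓ) {x : ℝ} (hx : 0 < x) {b : ℕ → ℝ}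
    (hb : Tendsto (fun n => b n / bseq ℓ x n) atTop (𝓝 1)) : b ~[atTop] bseq ℓ x :=
  (isEquivalent_iff_tendsto_one
    ((eventually_gt_atTop 0).mono fun _ hn => (bseq_pos hℓ hn hx).ne')).2 hb

lemma isLittleO_bseq_iff {ℓ : ℕ} (hℓ : 2 ≤ ℓ) {x : ℝ} (hx : 0 < x) {f : ℕ → ℝ} :
    f =o[atTop] bseq ℓ x ↔
      f =o[atTop] fun n : ℕ => (n : ℝ) ^ (((ℓ : ℝ) - 1) / (2 * (ℓ : ℝ))) := by
  have hK := Kconst_pos ℓ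
  have hℓ' : (0 : ℝ) < ℓ - 1 := sub_pos.2 (Nat.one_lt_cast.2 hℓ)
  exact isLittleO_const_mul_right_iff (by positivity)

lemma Hpoly_pos (ℓ n : ℕ) {x : ℝ} (hx : 0 < x) : 0 < Hpoly ℓ n x := by
  classical
  have : Nonempty (CommTuple ℓ (Equiv.Perm (Fin n))) := ⟨⟨1, fun _ _ => rfl⟩⟩
  refine mul_pos (by positivity) ?_
  rw [sum_Acount_mul]
  exact Finset.sum_pos (fun σ _ => by positivity) Finset.univ_nonempty

theorem log_expectK_exp (ℓ n : ℕ) {x : ℝ} (hx : 0 < x) (s a b : ℝ) :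
    log (expectK ℓ n x fun k => exp (s * ((k - a) / b))) =
      log (Hpoly ℓ n (x * exp (s / b)) / Hpoly ℓ n x) - s * a / b := by
  have hterm (k : ℕ) : exp (s * ((k - a) / b)) * (Acount ℓ n k : ℝ) * x ^ k =
      exp (-(s * a / b)) * ((Acount ℓ n k : ℝ) * (x * exp (s / b)) ^ k) := by
    have hexp : exp (s * ((k - a) / b)) = exp (-(s * a / b)) * exp (s / b) ^ k := by
      rw [← exp_nat_mul, ← exp_add]
      ring_nf
    rw [hexp, mul_pow]
    ring
  have hx' := Hpoly_pos ℓ n hx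
  have hy := Hpoly_pos ℓ n (x := x * exp (s / b)) (by positivity)
  rw [expectK]
  simp only [hterm]
  rw [← Finset.mul_sum, sum_Acount_mul_eq_factorial_mul_Hpoly,
    sum_Acount_mul_eq_factorial_mul_Hpoly, mul_div_assoc, mul_div_mul_left _ _ (by positivity),
    log_mul (exp_pos _).ne' (by positivity), log_exp]
  ring

theorem tendsto_log_Hpoly_tilt_sub {ℓ : ℕ} (hℓ : 2 ≤ ℓ) {x : ℝ} (hx : 0 < x) {b : ℕ → ℝ}
    (hb : b ~[atTop] bseq ℓ x) (s : ℝ) :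
    Tendsto (fun n => log (Hpoly ℓ n (x * exp (s / b n)) / Hpoly ℓ n x) -
      x * Zstair ℓ ((ℓ : ℤ) - 1) (tseq ℓ x n) * (s / b n)) atTop (𝓝 (s ^ 2 / 2)) := by
  obtain ⟨q, rfl⟩ := Nat.exists_eq_add_of_le' hℓ
  have hZ (t : ℝ) : Zstair (q + 2) (((q + 2 : ℕ) : ℤ) - 1) t =
      momentSeries (orbitWeight (q + 2)) 0 t := by
    rw [← Zstair_eq_momentSeries q 0 t]
    congr 1
    push_cast
    ring
  have hL := limitScale_pos q hx
  have hscale : Tendsto (fun n => b n * √(tseq (q + 2) x n ^ (q + 1))) atTop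
      (𝓝 (limitScale q x)) :=
    (hb.mul IsEquivalent.refl).symm.tendsto_nhds (tendsto_bseq_mul_sqrt_tseq_pow q hx)
  have htilt : Tendsto (fun n => s / b n / √(tseq (q + 2) x n ^ (q + 1))) atTop
      (𝓝 (s / limitScale q x)) :=
    (tendsto_const_nhds.div hscale hL.ne').congr fun n => (div_div _ _ _).symm
  have hlog := (powerLawWeights_orbitWeight q).tendsto_log_coeff_tilt_sub
    (fun y hy => isExpCoeff_Hpoly (one_le_two.trans hℓ) hy) hx (tendsto_tseq q hx)
    ((eventually_tseq_spec q hx).mono fun n hn => hn.2) htilt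
  have hvalue : x * ((q + 1).factorial * ∏ j ∈ Finset.Icc 2 (q + 2), zetaR j) /
      ((q + 2) * (q + 1)) * (s / limitScale q x) ^ 2 = s ^ 2 := by
    change x * Kconst (q + 2) / ((q + 2) * (q + 1)) * (s / limitScale q x) ^ 2 = s ^ 2
    rw [← limitScale_sq q hx, div_pow, mul_div_cancel₀ _ (by positivity)]
  rw [hvalue] at hlog
  simpa only [hZ] using hlog

end CommutingTuples

/-- the key proposition. If `a_n = x Z_{ℓ-1}^{[ℓ]}((Z_ℓ^{[ℓ]})^{-1}(n/x)) +
o(n^{(ℓ-1)/(2ℓ)})` and `b_n = ((x K_ℓ)^{1/(2ℓ)}/√(ℓ(ℓ-1))) n^{(ℓ-1)/(2ℓ)} (1+o(1))`, then for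
every real `s`, `ln E[exp(s (K_{ℓ,n} - a_n)/b_n)] → s²/2`. -/
theorem key_proposition (ℓ : ℕ) (hℓ : 2 ≤ ℓ) (x : ℝ) (hx : 0 < x)
    (a b : ℕ → ℝ) (hbpos : ∀ n, 0 < b n)
    (ha : (fun n : ℕ => a n - x * Zstair ℓ ((ℓ : ℤ) - 1) (ZstairInv ℓ ((n : ℝ) / x)))
      =o[atTop] fun n : ℕ => (n : ℝ) ^ (((ℓ : ℝ) - 1) / (2 * (ℓ : ℝ))))
    (hb : Tendsto (fun n : ℕ => b n / bseq ℓ x n) atTop (nhds 1)) :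
    ∀ s : ℝ,
      Tendsto (fun n : ℕ =>
          Real.log (expectK ℓ n x (fun k => Real.exp (s * (((k : ℝ) - a n) / b n)))))
        atTop (nhds (s ^ 2 / 2)) := by
  intro s
  have hequiv := CommutingTuples.isEquivalent_bseq_of_tendsto_div hℓ hx hb
  have hcenter := (((CommutingTuples.isLittleO_bseq_iff hℓ hx).2 ha).trans_isBigO
    hequiv.isBigO_symm).tendsto_div_nhds_zero
  have hlog := CommutingTuples.tendsto_log_Hpoly_tilt_sub hℓ hx hequiv s
  have hlim := hlog.sub (hcenter.const_mul s)
  rw [mul_zero, sub_zero] at hlim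
  refine hlim.congr fun n => ?_
  rw [CommutingTuples.log_expectK_exp ℓ n hx, tseq]
  ring
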